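/- arXiv:2508.10179 — 2 statements merged into one kernel-verified Lean document; each statement's English description precedes it below -/
import Mathlib

section
/- Let B ⊂ ℝ³ be the open unit ball and let φ : B → ℝ³ be a smooth diffeomorphism onto the open set U = φ(B) with invertible derivative Dφ(X) at every X ∈ B, such that φ and Dφ extend continuously to the closed unit ball. Let S̊ be a field of symmetric 3×3 matrices, continuous on the closed unit ball and smooth on B, satisfying the traction-free boundary condition S̊(X)·X = 0 for every X with |X| = 1. Define the spatial residual stress σ̊ on U by σ̊(φ(X)) = Dφ(X) S̊(X) Dφ(X)ᵀ. If the pair (φ⁻¹, σ̊) is universal, then Dφ is constant on B and S̊ = 0 on the closed unit ball. In particular, a compressible isotropic Cauchy elastic body occupying the unit ball with a non-trivial residual stress admits no universal deformations, and the universal deformations in the residual-stress-free case are exactly the homogeneous ones. -/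
open Matrix

/-- The Jacobian matrix (derivative) of a map `ψ : ℝ³ → ℝ³` at a point. -/
noncomputable def jac (ψ : (Fin 3 → ℝ) → (Fin 3 → ℝ)) (x : Fin 3 → ℝ) :
    Matrix (Fin 3) (Fin 3) ℝ :=
  fun i j => fderiv ℝ ψ x (Pi.single j 1) i

/-- Divergence of a matrix field: `(div T)_i = Σ_j ∂T_{ij}/∂x_j`. -/
noncomputable def mdiv (T : (Fin 3 → ℝ) → Matrix (Fin 3) (Fin 3) ℝ) (x : Fin 3 → ℝ) :
    Fin 3 → ℝ :=
  fun i => ∑ j, fderiv ℝ (fun y => T y i j) x (Pi.single j 1)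

/-- Left Cauchy–Green tensor `b = F Fᵀ` with `F = (Dψ)⁻¹`. -/
noncomputable def bField (ψ : (Fin 3 → ℝ) → (Fin 3 → ℝ)) (x : Fin 3 → ℝ) :
    Matrix (Fin 3) (Fin 3) ℝ :=
  (jac ψ x)⁻¹ * ((jac ψ x)⁻¹)ᵀ

/-- `c = b⁻¹ = Dψᵀ Dψ`. -/
noncomputable def cField (ψ : (Fin 3 → ℝ) → (Fin 3 → ℝ)) (x : Fin 3 → ℝ) :
    Matrix (Fin 3) (Fin 3) ℝ :=
  (jac ψ x)ᵀ * jac ψ x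

/-- The ten invariants of the pair `(b, σ̊)`. -/
noncomputable def invariants (b σ : Matrix (Fin 3) (Fin 3) ℝ) : Fin 10 → ℝ :=
  ![b.trace, (b.trace ^ 2 - (b * b).trace) / 2, b.det,
    σ.trace, (σ * σ).trace, (σ * σ * σ).trace,
    (b * σ).trace, (b * b * σ).trace, (b * σ * σ).trace, (b * b * σ * σ).trace]

/-- The Cauchy stress built from response functions `α₀,…,α₇` and tensors `b`, `c`, `σ̊`. -/
noncomputable def cauchyStress (α : Fin 8 → (Fin 10 → ℝ) → ℝ)
    (b c σ : Matrix (Fin 3) (Fin 3) ℝ) : Matrix (Fin 3) (Fin 3) ℝ :=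
  α 0 (invariants b σ) • (1 : Matrix (Fin 3) (Fin 3) ℝ)
    + α 1 (invariants b σ) • b + α 2 (invariants b σ) • c
    + α 3 (invariants b σ) • σ + α 4 (invariants b σ) • (σ * σ)
    + α 5 (invariants b σ) • (b * σ + σ * b)
    + α 6 (invariants b σ) • (c * σ + σ * c)
    + α 7 (invariants b σ) • (b * σ * σ + σ * σ * b)

/-- `(ψ, σ̊)` is universal: for all smooth response functions, the Cauchy stress is
divergence-free on `U`. -/
def IsUniversal (U : Set (Fin 3 → ℝ)) (ψ : (Fin 3 → ℝ) → (Fin 3 → ℝ))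
    (σ0 : (Fin 3 → ℝ) → Matrix (Fin 3) (Fin 3) ℝ) : Prop :=
  ∀ α : Fin 8 → (Fin 10 → ℝ) → ℝ, (∀ i, ContDiff ℝ (⊤ : ℕ∞) (α i)) →
    ∀ x ∈ U, mdiv (fun y => cauchyStress α (bField ψ y) (cField ψ y) (σ0 y)) x = 0

/-- The open Euclidean unit ball in `ℝ³`. -/
def unitBall : Set (Fin 3 → ℝ) := {X | ∑ i, X i ^ 2 < 1}

/-- The closed Euclidean unit ball in `ℝ³`. -/
def unitClosedBall : Set (Fin 3 → ℝ) := {X | ∑ i, X i ^ 2 ≤ 1}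

/-!
Taking `α₀` to be a coordinate function, or a single response function to be constant, universality
yields that the ten invariants have zero gradient and that `c` and `σ̊²` are divergence-free.

*Homogeneity.* As `I₂ = I₃ tr c`, the trace `tr c = ∑ₐ |∇ψₐ|²` is constant, and
`div c = (Δψ)ᵀ Dψ + ∇(tr c) / 2` forces every `ψₐ` to be harmonic. The entries of `Dψ` are then
harmonic with constant sum of squares, and the Laplacian of that sum is twice the sum of the squares
of their gradients; so `Dψ` is constant.

*Vanishing.* With `F = Dφ` constant, `σ̊²` pulls back to the divergence-free field
`T = S̊ Fᵀ F S̊`, which inherits the traction-free condition. By Signorini's mean stress theorem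
`∫ tr (T Fᵀ F) = ∫ tr (σ̊²) = 0`; as `tr (σ̊²) = I₅ ≥ 0`, this gives `σ̊ = 0`. Since `T` is only
continuous up to the boundary, the integral identity is replaced by an inequality, which suffices
because `I₅` is constant.
-/

open Filter Topology MeasureTheory

section CoordinateCalculus

variable {ι κ : Type*} [DecidableEq ι] {f g : (ι → ℝ) → ℝ} {v w : (ι → ℝ) → ι → ℝ}
  {x : ι → ℝ}

/-- The partial derivative `∂f/∂xⱼ`; like `fderiv`, it is `0` where `f` is not differentiable. -/
noncomputable def pderiv (j : ι) (f : (ι → ℝ) → ℝ) (x : ι → ℝ) : ℝ :=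
  fderiv ℝ f x (Pi.single j 1)

/-- The gradient of a scalar field as a vector of partial derivatives. Mathlib's `gradient` needs
an inner product space, whereas `ι → ℝ` carries the sup norm. -/
noncomputable def grad (f : (ι → ℝ) → ℝ) (x : ι → ℝ) : ι → ℝ :=
  fun j => pderiv j f x

lemma pderiv_congr (h : f =ᶠ[𝓝 x] g) (j : ι) : pderiv j f x = pderiv j g x := by
  rw [pderiv, h.fderiv_eq, pderiv]

lemma pderiv_const (c : ℝ) (j : ι) : pderiv j (fun _ => c) x = 0 := by
  simp [pderiv]

lemma fderiv_apply_eq_grad_dotProduct [Fintype ι] (f : (ι → ℝ) → ℝ) (x u : ι → ℝ) :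
    fderiv ℝ f x u = grad f x ⬝ᵥ u := by
  conv_lhs => rw [pi_eq_sum_univ' u, map_sum]
  simp only [map_smul, smul_eq_mul, dotProduct, grad, pderiv, mul_comm (u _)]

lemma grad_eq_zero_iff [Finite ι] : grad f x = 0 ↔ fderiv ℝ f x = 0 := by
  refine ⟨fun h => ?_, fun h => ?_⟩
  · cases nonempty_fintype ι
    ext u
    rw [fderiv_apply_eq_grad_dotProduct, h, zero_dotProduct, _root_.zero_apply]
  · ext j
    simp only [grad, pderiv, h, _root_.zero_apply, Pi.zero_apply]

lemma pderiv_fun_mul [Finite ι] (hf : DifferentiableAt ℝ f x) (hg : DifferentiableAt ℝ g x)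
    (j : ι) : pderiv j (fun y => f y * g y) x = f x * pderiv j g x + g x * pderiv j f x := by
  cases nonempty_fintype ι
  simp [pderiv, fderiv_fun_mul hf hg]

lemma pderiv_fun_sum [Finite ι] {s : Finset κ} {F : κ → (ι → ℝ) → ℝ}
    (hF : ∀ k ∈ s, DifferentiableAt ℝ (F k) x) (j : ι) :
    pderiv j (fun y => ∑ k ∈ s, F k y) x = ∑ k ∈ s, pderiv j (F k) x := by
  cases nonempty_fintype ι
  simp [pderiv, fderiv_fun_sum hF]

lemma grad_comp [Finite ι] {q : ℝ → ℝ} (hq : DifferentiableAt ℝ q (f x))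
    (hf : DifferentiableAt ℝ f x) :
    grad (fun y => q (f y)) x = deriv q (f x) • grad f x := by
  cases nonempty_fintype ι
  ext j
  have hchain : fderiv ℝ (fun y => q (f y)) x = deriv q (f x) • fderiv ℝ f x :=
    (hq.hasDerivAt.comp_hasFDerivAt x hf.hasFDerivAt).fderiv
  simp only [grad, pderiv, hchain, _root_.smul_apply, Pi.smul_apply]

lemma hasCompactSupport_pderiv (hs : HasCompactSupport f) (j : ι) :
    HasCompactSupport (pderiv j f) :=
  hs.fderiv_apply ℝ _

variable [Fintype ι]

/-- The divergence of a vector field. The `i`-th entry of `mdiv T` is definitionally the divergence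
of the `i`-th row of `T`. -/
noncomputable def divergence (v : (ι → ℝ) → ι → ℝ) (x : ι → ℝ) : ℝ :=
  ∑ j, pderiv j (fun y => v y j) x

/-- The Laplacian of a scalar field, as the divergence of its gradient. -/
noncomputable def laplacian (f : (ι → ℝ) → ℝ) : (ι → ℝ) → ℝ :=
  divergence (grad f)

lemma divergence_congr (h : v =ᶠ[𝓝 x] w) : divergence v x = divergence w x :=
  Finset.sum_congr rfl fun j _ => pderiv_congr (h.mono fun _ hy => congrFun hy j) j

lemma divergence_fun_sum {s : Finset κ} {V : κ → (ι → ℝ) → ι → ℝ}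
    (hV : ∀ k ∈ s, DifferentiableAt ℝ (V k) x) :
    divergence (fun y => ∑ k ∈ s, V k y) x = ∑ k ∈ s, divergence (V k) x := by
  simp only [divergence, Finset.sum_apply]
  rw [Finset.sum_comm]
  exact Finset.sum_congr rfl fun j _ =>
    pderiv_fun_sum (fun k hk => differentiableAt_pi.1 (hV k hk) j) j

lemma divergence_smul (hf : DifferentiableAt ℝ f x) (hv : DifferentiableAt ℝ v x) :
    divergence (fun y => f y • v y) x = f x * divergence v x + grad f x ⬝ᵥ v x := by
  simp only [divergence, Pi.smul_apply, smul_eq_mul,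
    pderiv_fun_mul hf (differentiableAt_pi.1 hv _), Finset.sum_add_distrib, Finset.mul_sum,
    dotProduct, grad, mul_comm (v x _)]

lemma divergence_sub_const_smul (hv : DifferentiableAt ℝ v x) (hw : DifferentiableAt ℝ w x)
    (c : ℝ) : divergence (fun y => v y - c • w y) x = divergence v x - c * divergence w x := by
  have hpderiv (j : ι) : pderiv j (fun y => v y j - c * w y j) x
      = pderiv j (fun y => v y j) x - c * pderiv j (fun y => w y j) x := by
    have hvj := differentiableAt_pi.1 hv j
    have hwj := differentiableAt_pi.1 hw j
    simp [pderiv, fderiv_fun_sub hvj (hwj.const_mul c), fderiv_const_mul hwj]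
  simp only [divergence, Pi.sub_apply, Pi.smul_apply, smul_eq_mul, hpderiv,
    Finset.sum_sub_distrib, Finset.mul_sum]

lemma contDiffAt_pderiv {m n : WithTop ℕ∞} (hf : ContDiffAt ℝ n f x) (hmn : m + 1 ≤ n) (j : ι) :
    ContDiffAt ℝ m (pderiv j f) x :=
  (hf.fderiv_right hmn).clm_apply contDiffAt_const

lemma contDiffAt_grad {m n : WithTop ℕ∞} (hf : ContDiffAt ℝ n f x) (hmn : m + 1 ≤ n) :
    ContDiffAt ℝ m (grad f) x :=
  contDiffAt_pi.2 fun j => contDiffAt_pderiv hf hmn j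

lemma differentiableAt_pderiv (hf : ContDiffAt ℝ 2 f x) (j : ι) :
    DifferentiableAt ℝ (pderiv j f) x :=
  (contDiffAt_pderiv (m := 1) hf (by norm_num) j).differentiableAt one_ne_zero

lemma differentiableAt_grad (hf : ContDiffAt ℝ 2 f x) : DifferentiableAt ℝ (grad f) x :=
  differentiableAt_pi.2 fun j => differentiableAt_pderiv hf j

lemma pderiv_comm (hf : ContDiffAt ℝ 2 f x) (i j : ι) :
    pderiv i (pderiv j f) x = pderiv j (pderiv i f) x := by
  have hdiff : DifferentiableAt ℝ (fderiv ℝ f) x :=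
    (hf.fderiv_right (m := 1) (by norm_num)).differentiableAt one_ne_zero
  have pderiv_pderiv (a b : ι) : pderiv a (pderiv b f) x
      = fderiv ℝ (fderiv ℝ f) x (Pi.single a 1) (Pi.single b 1) := by
    unfold pderiv
    rw [fderiv_clm_apply hdiff (differentiableAt_const _)]
    simp
  rw [pderiv_pderiv, pderiv_pderiv]
  exact hf.isSymmSndFDerivAt (by simp) _ _

lemma laplacian_pderiv (hf : ContDiffAt ℝ 3 f x) (j : ι) :
    laplacian (pderiv j f) x = pderiv j (laplacian f) x := by
  have hC2 (i : ι) : ContDiffAt ℝ 2 (pderiv i f) x := contDiffAt_pderiv hf (by norm_num) i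
  have hcomm (i : ι) : pderiv i (pderiv j f) =ᶠ[𝓝 x] pderiv j (pderiv i f) :=
    (hf.eventually (by simp)).mono fun y hy => pderiv_comm (hy.of_le (by norm_num)) i j
  calc laplacian (pderiv j f) x = ∑ i, pderiv i (pderiv i (pderiv j f)) x := rfl
    _ = ∑ i, pderiv j (pderiv i (pderiv i f)) x := Finset.sum_congr rfl fun i _ => by
      rw [pderiv_congr (hcomm i), pderiv_comm (hC2 i)]
    _ = pderiv j (laplacian f) x :=
      (pderiv_fun_sum (fun i _ => differentiableAt_pderiv (hC2 i) i) j).symm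

lemma laplacian_fun_sq (hf : ContDiffAt ℝ 2 f x) :
    laplacian (fun y => f y ^ 2) x = 2 * (f x * laplacian f x + grad f x ⬝ᵥ grad f x) := by
  have hdiff : ∀ᶠ y in 𝓝 x, DifferentiableAt ℝ f y :=
    (hf.eventually (by simp)).mono fun y hy => hy.differentiableAt two_ne_zero
  have hgrad : grad (fun y => f y ^ 2) =ᶠ[𝓝 x] fun y => f y • (2 : ℝ) • grad f y := by
    filter_upwards [hdiff] with y hy
    ext j
    simp only [grad, pow_two, pderiv_fun_mul hy hy, Pi.smul_apply, smul_eq_mul]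
    ring
  have hf' := hdiff.self_of_nhds
  have hgrad' := differentiableAt_grad hf
  rw [laplacian, divergence_congr hgrad, divergence_smul hf' (hgrad'.fun_const_smul _),
    divergence_smul (differentiableAt_const _) hgrad', dotProduct_smul, laplacian]
  have hconst : grad (fun _ => (2 : ℝ)) x = 0 := funext fun j => pderiv_const 2 j
  rw [hconst, zero_dotProduct, smul_eq_mul]
  ring

lemma laplacian_fun_sum {s : Finset κ} {F : κ → (ι → ℝ) → ℝ}
    (hF : ∀ k ∈ s, ContDiffAt ℝ 2 (F k) x) :
    laplacian (fun y => ∑ k ∈ s, F k y) x = ∑ k ∈ s, laplacian (F k) x := by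
  have hdiff : ∀ᶠ y in 𝓝 x, ∀ k ∈ s, DifferentiableAt ℝ (F k) y :=
    (eventually_all_finset s).2 fun k hk =>
      ((hF k hk).eventually (by simp)).mono fun y hy => hy.differentiableAt two_ne_zero
  have hgrad : grad (fun y => ∑ k ∈ s, F k y) =ᶠ[𝓝 x] fun y => ∑ k ∈ s, grad (F k) y := by
    filter_upwards [hdiff] with y hy
    ext j
    simp only [grad, pderiv_fun_sum hy, Finset.sum_apply]
  rw [laplacian, divergence_congr hgrad,
    divergence_fun_sum fun k hk => differentiableAt_grad (hF k hk)]
  rfl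

lemma grad_eq_zero_of_harmonic_of_sum_sq_eventually_const [Fintype κ] {F : κ → (ι → ℝ) → ℝ}
    (hF : ∀ k, ContDiffAt ℝ 2 (F k) x) (hharm : ∀ k, laplacian (F k) x = 0) {c : ℝ}
    (hconst : (fun y => ∑ k, F k y ^ 2) =ᶠ[𝓝 x] fun _ => c) (k : κ) : grad (F k) x = 0 := by
  have hlap : laplacian (fun y => ∑ k, F k y ^ 2) x = 0 := by
    have hgrad : grad (fun y => ∑ k, F k y ^ 2) =ᶠ[𝓝 x] fun _ => 0 :=
      hconst.eventually_nhds.mono fun y hy =>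
        funext fun j => (pderiv_congr hy j).trans (pderiv_const c j)
    rw [laplacian, divergence_congr hgrad]
    exact Finset.sum_eq_zero fun j _ => pderiv_const 0 j
  rw [laplacian_fun_sum fun k _ => (hF k).pow 2] at hlap
  simp only [laplacian_fun_sq (hF _), hharm, mul_zero, zero_add] at hlap
  have hnonneg (k : κ) : 0 ≤ 2 * (grad (F k) x ⬝ᵥ grad (F k) x) :=
    mul_nonneg zero_le_two (Finset.sum_nonneg fun j _ => mul_self_nonneg _)
  have hk := (Finset.sum_eq_zero_iff_of_nonneg fun k _ => hnonneg k).1 hlap k (Finset.mem_univ k)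
  exact dotProduct_self_eq_zero.1 ((mul_eq_zero_iff_left two_ne_zero).1 hk)

lemma divergence_pderiv_smul_grad (hf : ContDiffAt ℝ 2 f x) (i : ι) :
    divergence (fun y => pderiv i f y • grad f y) x
      = pderiv i f x * laplacian f x + pderiv i (fun y => grad f y ⬝ᵥ grad f y) x / 2 := by
  have hd := differentiableAt_pderiv hf
  have hsq : pderiv i (fun y => grad f y ⬝ᵥ grad f y) x
      = 2 * (grad (pderiv i f) x ⬝ᵥ grad f x) := by
    simp only [dotProduct, grad]
    rw [pderiv_fun_sum fun j _ => (hd j).fun_mul (hd j), Finset.mul_sum]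
    refine Finset.sum_congr rfl fun j _ => ?_
    rw [pderiv_fun_mul (hd j) (hd j), pderiv_comm hf i j]
    ring
  rw [divergence_smul (hd i) (differentiableAt_grad hf), hsq, laplacian]
  ring

lemma divergence_vecMul {T : (ι → ℝ) → Matrix ι ι ℝ} {u : (ι → ℝ) → ι → ℝ}
    (hu : DifferentiableAt ℝ u x) (hT : ∀ i, DifferentiableAt ℝ (fun y => T y i) x) :
    divergence (fun y => u y ᵥ* T y) x
      = ∑ i, (u x i * divergence (fun y => T y i) x + grad (fun y => u y i) x ⬝ᵥ T x i) := by
  have hui := differentiableAt_pi.1 hu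
  simp only [vecMul_eq_sum]
  rw [divergence_fun_sum fun i _ => (hui i).fun_smul (hT i)]
  exact Finset.sum_congr rfl fun i _ => divergence_smul (hui i) (hT i)

lemma pderiv_mulVec_apply (A : Matrix κ ι ℝ) (k : κ) (j : ι) :
    pderiv j (fun y => (A *ᵥ y) k) x = A k j := by
  have hlin : (fun y => (A *ᵥ y) k)
      = LinearMap.toContinuousLinearMap (LinearMap.proj k ∘ₗ A.mulVecLin) := rfl
  rw [pderiv, hlin, ContinuousLinearMap.fderiv]
  simp

end CoordinateCalculus

lemma exists_antitone_smooth_cutoff {a b : ℝ} (hab : a < b) :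
    ∃ q : ℝ → ℝ, ContDiff ℝ 1 q ∧ Antitone q ∧ (∀ s, 0 ≤ q s) ∧
      (∀ s ≤ a, q s = 1 ∧ deriv q s = 0) ∧ ∀ s, b ≤ s → q s = 0 := by
  have hba : 0 < b - a := sub_pos.2 hab
  have hone (s : ℝ) (hs : s ≤ a) : Real.smoothTransition ((b - s) / (b - a)) = 1 :=
    Real.smoothTransition.one_of_one_le ((one_le_div hba).2 (by linarith))
  refine ⟨fun s => Real.smoothTransition ((b - s) / (b - a)),
    Real.smoothTransition.contDiff.comp ((contDiff_const.sub contDiff_id).div_const _),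
    fun s t hst => Real.smoothTransition.monotone (by gcongr),
    fun s => Real.smoothTransition.nonneg _, fun s hs => ⟨hone s hs, ?_⟩, fun s hs => ?_⟩
  · exact IsLocalMax.deriv_eq_zero (.of_forall fun t => by
      simpa only [hone s hs] using Real.smoothTransition.le_one _)
  · exact Real.smoothTransition.zero_of_nonpos (div_nonpos_of_nonpos_of_nonneg (by linarith) hba.le)

lemma contDiff_comp_smul_of_eq_zero {E F : Type*} [NormedAddCommGroup E] [NormedSpace ℝ E]
    [NormedAddCommGroup F] [NormedSpace ℝ F] {r : E → ℝ} {u : E → F} {q : ℝ → ℝ} {b c : ℝ}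
    (hq : ContDiff ℝ 1 q) (hr : ContDiff ℝ 1 r) (hu : ContDiffOn ℝ 1 u {x | r x < c})
    (hb : b < c) (hq0 : ∀ s, b ≤ s → q s = 0) : ContDiff ℝ 1 fun y => q (r y) • u y := by
  refine contDiff_iff_contDiffAt.2 fun x => ?_
  rcases lt_or_ge (r x) c with hx | hx
  · have hopen : IsOpen {x | r x < c} := isOpen_lt hr.continuous continuous_const
    exact (hq.comp hr).contDiffAt.smul (hu.contDiffAt (hopen.mem_nhds hx))
  · refine (contDiffAt_const (c := (0 : F))).congr_of_eventuallyEq ?_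
    filter_upwards [hr.continuous.continuousAt.eventually_const_lt (hb.trans_le hx)] with y hy
    rw [hq0 _ hy.le, zero_smul]

lemma exists_lt_forall_neg_of_neg_on_level {X : Type*} [TopologicalSpace X] {r g : X → ℝ} {c : ℝ}
    (hr : Continuous r) (hcompact : IsCompact {x | r x ≤ c}) (hg : ContinuousOn g {x | r x ≤ c})
    (hneg : ∀ x, r x = c → g x < 0) : ∃ m < c, ∀ x, m < r x → r x ≤ c → g x < 0 := by
  have hclosed : IsClosed {x | r x ≤ c} := isClosed_le hr continuous_const
  have hK : IsCompact ({x | r x ≤ c} ∩ g ⁻¹' Set.Ici 0) :=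
    hcompact.of_isClosed_subset (hg.preimage_isClosed_of_isClosed hclosed isClosed_Ici)
      Set.inter_subset_left
  rcases Set.eq_empty_or_nonempty ({x | r x ≤ c} ∩ g ⁻¹' Set.Ici 0) with hempty | hne
  · exact ⟨c - 1, sub_one_lt c, fun x _ hx => not_le.1 fun hgx =>
      Set.eq_empty_iff_forall_notMem.1 hempty x ⟨hx, hgx⟩⟩
  · obtain ⟨z, ⟨hz, hgz⟩, hmax⟩ := hK.exists_isMaxOn hne hr.continuousOn
    exact ⟨r z, lt_of_le_of_ne hz fun h => (hneg z h).not_ge hgz, fun x hzx hx =>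
      not_le.1 fun hgx => hzx.not_ge (hmax ⟨hx, hgx⟩)⟩

section DivergenceTheorem

variable {ι : Type*} [Fintype ι] [DecidableEq ι] {f ρ : (ι → ℝ) → ℝ} {v w : (ι → ℝ) → ι → ℝ}
  {x : ι → ℝ}

lemma continuous_pderiv (hf : ContDiff ℝ 1 f) (j : ι) : Continuous (pderiv j f) :=
  (hf.continuous_fderiv one_ne_zero).clm_apply continuous_const

lemma continuous_divergence (hw : ContDiff ℝ 1 w) : Continuous (divergence w) :=
  continuous_finsetSum _ fun j _ => continuous_pderiv (contDiff_pi.1 hw j) j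

lemma contDiff_grad (hρ : ContDiff ℝ 2 ρ) : ContDiff ℝ 1 (grad ρ) :=
  contDiff_iff_contDiffAt.2 fun _ => contDiffAt_grad hρ.contDiffAt (by norm_num)

lemma integral_pderiv_eq_zero (hf : ContDiff ℝ 1 f) (hs : HasCompactSupport f) (j : ι) :
    ∫ x, pderiv j f x = 0 := by
  have hint : Integrable (pderiv j f) :=
    (continuous_pderiv hf j).integrable_of_hasCompactSupport (hasCompactSupport_pderiv hs j)
  have hparts := integral_mul_fderiv_eq_neg_fderiv_mul_of_integrable (μ := volume)
    (f := fun _ : ι → ℝ => (1 : ℝ)) (g := f) (v := Pi.single j 1)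
    (by simp) (by simpa using! hint)
    (by simpa using hf.continuous.integrable_of_hasCompactSupport hs)
    (fun x _ => differentiableAt_const _) (fun x _ => hf.differentiable one_ne_zero x)
  simpa [pderiv] using hparts

lemma integral_divergence_eq_zero (hw : ContDiff ℝ 1 w) (hs : HasCompactSupport w) :
    ∫ x, divergence w x = 0 := by
  have hwj := contDiff_pi.1 hw
  have hsj (j : ι) : HasCompactSupport fun y => w y j :=
    hs.comp_left (g := fun u : ι → ℝ => u j) rfl
  simp only [divergence]
  rw [integral_finsetSum _ fun j _ => (continuous_pderiv (hwj j) j).integrable_of_hasCompactSupport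
    (hasCompactSupport_pderiv (hsj j) j)]
  exact Finset.sum_eq_zero fun j _ => integral_pderiv_eq_zero (hwj j) (hsj j) j

lemma divergence_eq_zero_of_nonneg (hw : ContDiff ℝ 1 w) (hs : HasCompactSupport w)
    (hnonneg : ∀ x, 0 ≤ divergence w x) (x : ι → ℝ) : divergence w x = 0 := by
  by_contra hx
  have hsupp : HasCompactSupport (divergence w) := by
    refine HasCompactSupport.intro hs fun y hy => ?_
    rw [divergence_congr (notMem_tsupport_iff_eventuallyEq.1 hy)]
    exact Finset.sum_eq_zero fun j _ => pderiv_const 0 j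
  have hpos := (continuous_divergence hw).integral_pos_of_hasCompactSupport_nonneg_nonzero
    (μ := volume) hsupp hnonneg hx
  exact hpos.ne' (integral_divergence_eq_zero hw hs)

lemma exists_divergence_nonpos_of_inward {m c : ℝ} (hρ : ContDiff ℝ 1 ρ)
    (hcompact : IsCompact {x | ρ x ≤ c}) (hw : ContDiffOn ℝ 1 w {x | ρ x < c}) (hm : m < c)
    (hinward : ∀ x, m < ρ x → ρ x < c → grad ρ x ⬝ᵥ w x ≤ 0) (hx : ρ x < c) :
    ∃ y, ρ y < c ∧ divergence w y ≤ 0 := by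
  by_contra! hpos
  obtain ⟨b, hab, hb⟩ := exists_between (max_lt hm hx)
  obtain ⟨q, hqC, hanti, hq, hq1, hq0⟩ := exists_antitone_smooth_cutoff hab
  have hWC := contDiff_comp_smul_of_eq_zero hqC hρ hw hb hq0
  have hWs : HasCompactSupport fun y => q (ρ y) • w y := .intro hcompact fun y hy => by
    rw [hq0 _ (hb.le.trans (not_le.1 hy).le), zero_smul]
  have hdiv (y : ι → ℝ) (hy : ρ y < c) : divergence (fun y => q (ρ y) • w y) y
      = q (ρ y) * divergence w y + deriv q (ρ y) * (grad ρ y ⬝ᵥ w y) := by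
    have hopen : IsOpen {x | ρ x < c} := isOpen_lt hρ.continuous continuous_const
    have hwd := (hw.contDiffAt (hopen.mem_nhds hy)).differentiableAt one_ne_zero
    have hqd := hqC.differentiable one_ne_zero (ρ y)
    have hρd := hρ.differentiable one_ne_zero y
    rw [divergence_smul (f := fun z => q (ρ z)) (hqd.comp y hρd) hwd, grad_comp hqd hρd,
      smul_dotProduct, smul_eq_mul]
  have hnonneg (y : ι → ℝ) : 0 ≤ divergence (fun y => q (ρ y) • w y) y := by
    rcases lt_or_ge (ρ y) c with hy | hy
    · rw [hdiv y hy]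
      refine add_nonneg (mul_nonneg (hq _) (hpos y hy).le) ?_
      rcases le_or_gt (ρ y) m with hym | hym
      · rw [(hq1 _ (hym.trans (le_max_left _ _))).2, zero_mul]
      · exact mul_nonneg_of_nonpos_of_nonpos hanti.deriv_nonpos (hinward y hym hy)
    · have hW0 : (fun y => q (ρ y) • w y) =ᶠ[𝓝 y] fun _ => 0 := by
        filter_upwards [hρ.continuous.continuousAt.eventually_const_lt (hb.trans_le hy)] with z hz
        rw [hq0 _ hz.le, zero_smul]
      rw [divergence_congr hW0]
      exact (Finset.sum_eq_zero fun j _ => pderiv_const 0 j).ge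
  have hzero := divergence_eq_zero_of_nonneg hWC hWs hnonneg x
  obtain ⟨hqx, hqx'⟩ := hq1 (ρ x) (le_max_right _ _)
  rw [hdiv x hx, hqx, hqx', one_mul, zero_mul, add_zero] at hzero
  exact (hpos x hx).ne' hzero

/-- `ρ` is a regular defining function of the bounded domain `{ρ < 1}`, whose boundary `{ρ = 1}`
then has normal direction `grad ρ`. The level is `1` rather than the customary `0`, so that the unit
ball is defined by `∑ i, x i ^ 2`. -/
structure IsDefiningFunction (ρ : (ι → ℝ) → ℝ) : Prop where
  contDiff : ContDiff ℝ 2 ρ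
  isCompact : IsCompact {x | ρ x ≤ 1}
  grad_ne_zero : ∀ x, ρ x = 1 → grad ρ x ≠ 0

namespace IsDefiningFunction

lemma isOpen (hρ : IsDefiningFunction ρ) : IsOpen {x | ρ x < 1} :=
  isOpen_lt hρ.contDiff.continuous continuous_const

lemma subset_closure (hρ : IsDefiningFunction ρ) : {x | ρ x ≤ 1} ⊆ closure {x | ρ x < 1} := by
  intro x hx
  by_contra hcl
  have hx1 : ρ x = 1 := le_antisymm hx (not_lt.1 fun h => hcl (_root_.subset_closure h))
  have hmin : IsLocalMin ρ x := by
    filter_upwards [isClosed_closure.isOpen_compl.mem_nhds hcl] with y hy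
    exact hx1.trans_le (not_lt.1 fun h => hy (_root_.subset_closure h))
  exact hρ.grad_ne_zero x hx1 (grad_eq_zero_iff.2 hmin.fderiv_eq_zero)

-- Subtracting a small multiple of `grad ρ` makes the field point strictly inward at the boundary
-- while costing less than `k` in divergence.
lemma nonpos_of_le_divergence_of_tangent (hρ : IsDefiningFunction ρ) (hx : ρ x < 1)
    (hv : ContDiffOn ℝ 1 v {x | ρ x < 1}) (hcont : ContinuousOn v {x | ρ x ≤ 1})
    (htangent : ∀ x, ρ x = 1 → grad ρ x ⬝ᵥ v x = 0) {k : ℝ}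
    (hk : ∀ x, ρ x < 1 → k ≤ divergence v x) : k ≤ 0 := by
  by_contra! hkpos
  have hgrad := contDiff_grad hρ.contDiff
  obtain ⟨M, hM⟩ := hρ.isCompact.bddAbove_image (continuous_divergence hgrad).continuousOn
  have hlap (y : ι → ℝ) (hy : ρ y < 1) : laplacian ρ y ≤ max M 1 :=
    (hM (Set.mem_image_of_mem _ hy.le)).trans (le_max_left _ _)
  have hMpos : 0 < max M 1 := zero_lt_one.trans_le (le_max_right _ _)
  obtain ⟨δ, hδ, hδk⟩ := exists_between (div_pos hkpos hMpos)
  have hinner : ContinuousOn (fun y => grad ρ y ⬝ᵥ (v y - δ • grad ρ y)) {x | ρ x ≤ 1} := by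
    have := hgrad.continuous.continuousOn (s := {x | ρ x ≤ 1})
    exact continuousOn_finsetSum _ fun i _ => (continuousOn_pi.1 this i).mul
      (continuousOn_pi.1 (hcont.sub (this.const_smul δ)) i)
  have hinward (y : ι → ℝ) (hy : ρ y = 1) : grad ρ y ⬝ᵥ (v y - δ • grad ρ y) < 0 := by
    have hsq : 0 < grad ρ y ⬝ᵥ grad ρ y :=
      (Finset.sum_nonneg fun i _ => mul_self_nonneg _).lt_of_ne'
        (dotProduct_self_eq_zero.not.2 (hρ.grad_ne_zero y hy))
    rw [dotProduct_sub, htangent y hy, dotProduct_smul, smul_eq_mul, zero_sub]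
    exact neg_neg_of_pos (mul_pos hδ hsq)
  obtain ⟨m, hm, hcollar⟩ := exists_lt_forall_neg_of_neg_on_level hρ.contDiff.continuous
    hρ.isCompact hinner hinward
  obtain ⟨y, hy, hdiv⟩ := exists_divergence_nonpos_of_inward (hρ.contDiff.of_le one_le_two)
    hρ.isCompact (hv.sub (hgrad.contDiffOn.const_smul δ)) hm
    (fun y hmy hy => (hcollar y hmy hy.le).le) hx
  have hvd := (hv.contDiffAt (hρ.isOpen.mem_nhds hy)).differentiableAt one_ne_zero
  rw [divergence_sub_const_smul hvd (hgrad.differentiable one_ne_zero y)] at hdiv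
  have hbound : δ * laplacian ρ y < k :=
    (mul_le_mul_of_nonneg_left (hlap y hy) hδ.le).trans_lt ((lt_div_iff₀ hMpos).1 hδk)
  exact absurd (hk y hy) (not_le.2 (by rw [laplacian] at hbound; linarith))

-- Signorini's mean stress theorem: test equilibrium against the linear displacement `A *ᵥ y`.
lemma nonpos_of_le_trace_mul_transpose (hρ : IsDefiningFunction ρ) (hx : ρ x < 1)
    {T : (ι → ℝ) → Matrix ι ι ℝ} (hT : ∀ i, ContDiffOn ℝ 1 (fun y => T y i) {x | ρ x < 1})
    (hcont : ContinuousOn T {x | ρ x ≤ 1})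
    (hdiv : ∀ x, ρ x < 1 → ∀ i, divergence (fun y => T y i) x = 0)
    (htraction : ∀ x, ρ x = 1 → T x *ᵥ grad ρ x = 0) (A : Matrix ι ι ℝ) {k : ℝ}
    (hk : ∀ x, ρ x < 1 → k ≤ (T x * Aᵀ).trace) : k ≤ 0 := by
  have hA : ContDiff ℝ 1 fun y => A *ᵥ y :=
    (LinearMap.toContinuousLinearMap A.mulVecLin).contDiff
  refine hρ.nonpos_of_le_divergence_of_tangent (v := fun y => (A *ᵥ y) ᵥ* T y) hx ?_ ?_ ?_ ?_
  · simp only [vecMul_eq_sum]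
    exact ContDiffOn.sum fun i _ => (contDiff_pi.1 hA i).contDiffOn.smul (hT i)
  · simp only [vecMul_eq_sum]
    exact continuousOn_finsetSum _ fun i _ =>
      (contDiff_pi.1 hA i).continuous.continuousOn.smul (continuousOn_pi.1 hcont i)
  · intro y hy
    rw [dotProduct_comm, ← dotProduct_mulVec, htraction y hy, dotProduct_zero]
  · intro y hy
    have hTd (i : ι) := ((hT i).contDiffAt (hρ.isOpen.mem_nhds hy)).differentiableAt one_ne_zero
    rw [divergence_vecMul (hA.differentiable one_ne_zero y) hTd]
    convert hk y hy using 1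
    simp only [hdiv y hy, mul_zero, zero_add, trace, diag, mul_apply, transpose_apply, dotProduct,
      grad, pderiv_mulVec_apply, mul_comm]

end IsDefiningFunction

end DivergenceTheorem

section Kinematics

variable {φ ψ : (Fin 3 → ℝ) → Fin 3 → ℝ} {Ω : Set (Fin 3 → ℝ)} {x X : Fin 3 → ℝ}

lemma jac_eq_toMatrix' (φ : (Fin 3 → ℝ) → Fin 3 → ℝ) (X : Fin 3 → ℝ) :
    jac φ X = (fderiv ℝ φ X).toLinearMap.toMatrix' := by
  ext i j
  simp [jac, LinearMap.toMatrix'_apply]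

lemma jac_row (hψ : DifferentiableAt ℝ ψ x) (a : Fin 3) :
    jac ψ x a = grad (fun y => ψ y a) x := by
  ext j
  simp [jac, grad, pderiv, (hasFDerivAt_pi'.1 hψ.hasFDerivAt a).fderiv]

lemma grad_comp_jac {f : (Fin 3 → ℝ) → ℝ} (hψ : DifferentiableAt ℝ ψ x)
    (hf : DifferentiableAt ℝ f (ψ x)) :
    grad (fun y => f (ψ y)) x = grad f (ψ x) ᵥ* jac ψ x := by
  ext j
  have hchain : fderiv ℝ (fun y => f (ψ y)) x = (fderiv ℝ f (ψ x)).comp (fderiv ℝ ψ x) :=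
    fderiv_comp x hf hψ
  simp only [grad, pderiv, hchain, ContinuousLinearMap.comp_apply]
  exact fderiv_apply_eq_grad_dotProduct f (ψ x) _

lemma exists_hasFDerivAt_equiv (hφ : DifferentiableAt ℝ φ X) (hdet : (jac φ X).det ≠ 0) :
    ∃ φ' : (Fin 3 → ℝ) ≃L[ℝ] (Fin 3 → ℝ), HasFDerivAt φ (φ' : (Fin 3 → ℝ) →L[ℝ] _) X := by
  rw [jac_eq_toMatrix', LinearMap.det_toMatrix'] at hdet
  exact ⟨(fderiv ℝ φ X).toContinuousLinearEquivOfDetNeZero hdet,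
    hφ.hasFDerivAt.congr_fderiv (by ext; rfl)⟩

lemma contDiffAt_leftInverse {n : WithTop ℕ∞} (hn : n ≠ 0) (hφ : ContDiffAt ℝ n φ X)
    (hdet : (jac φ X).det ≠ 0) (hψ : ∀ᶠ Y in 𝓝 X, ψ (φ Y) = Y) : ContDiffAt ℝ n ψ (φ X) := by
  obtain ⟨φ', hφ'⟩ := exists_hasFDerivAt_equiv (hφ.differentiableAt hn) hdet
  exact (hφ.to_localInverse hφ' hn).congr_of_eventuallyEq
    ((hφ.hasStrictFDerivAt' hφ' hn).localInverse_unique hψ)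

lemma isOpen_image_of_det_jac_ne_zero (hΩ : IsOpen Ω) (hφ : ContDiffOn ℝ 1 φ Ω)
    (hdet : ∀ X ∈ Ω, (jac φ X).det ≠ 0) : IsOpen (φ '' Ω) := by
  rw [isOpen_iff_mem_nhds]
  rintro _ ⟨X, hX, rfl⟩
  have hφX := hφ.contDiffAt (hΩ.mem_nhds hX)
  obtain ⟨φ', hφ'⟩ := exists_hasFDerivAt_equiv (hφX.differentiableAt one_ne_zero) (hdet X hX)
  rw [← (hφX.hasStrictFDerivAt' hφ' one_ne_zero).map_nhds_eq_of_equiv]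
  exact image_mem_map (hΩ.mem_nhds hX)

lemma jac_leftInverse_mul_jac (hφ : DifferentiableAt ℝ φ X) (hψφ : DifferentiableAt ℝ ψ (φ X))
    (hψ : ∀ᶠ Y in 𝓝 X, ψ (φ Y) = Y) : jac ψ (φ X) * jac φ X = 1 := by
  have hcomp : (fderiv ℝ ψ (φ X)).comp (fderiv ℝ φ X) = .id ℝ _ := by
    rw [← fderiv_comp X hψφ hφ, ← fderiv_id]
    exact Filter.EventuallyEq.fderiv_eq hψ
  rw [jac_eq_toMatrix', jac_eq_toMatrix', ← LinearMap.toMatrix'_comp,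
    ← ContinuousLinearMap.toLinearMap_comp, hcomp]
  exact LinearMap.toMatrix'_id

lemma differentiableAt_jac (hψ : ContDiffAt ℝ 2 ψ x) (a j : Fin 3) :
    DifferentiableAt ℝ (fun y => jac ψ y a j) x :=
  have hfderiv : DifferentiableAt ℝ (fderiv ℝ ψ) x :=
    (hψ.fderiv_right (m := 1) (by norm_num)).differentiableAt one_ne_zero
  differentiableAt_pi.1 (hfderiv.clm_apply (differentiableAt_const _)) a

lemma cField_row (hψ : DifferentiableAt ℝ ψ x) (i : Fin 3) :
    cField ψ x i = ∑ a, pderiv i (fun y => ψ y a) x • grad (fun y => ψ y a) x := by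
  rw [cField, mul_apply_eq_vecMul, vecMul_eq_sum]
  refine Finset.sum_congr rfl fun a _ => ?_
  rw [transpose_apply, jac_row hψ]
  rfl

lemma trace_cField (hψ : DifferentiableAt ℝ ψ x) :
    (cField ψ x).trace = ∑ a, grad (fun y => ψ y a) x ⬝ᵥ grad (fun y => ψ y a) x := by
  simp only [cField, trace, diag, mul_apply, transpose_apply, jac_row hψ, dotProduct]
  exact Finset.sum_comm

lemma mdiv_cField (hψ : ContDiffAt ℝ 2 ψ x) :
    mdiv (cField ψ) x = (fun a => laplacian (fun y => ψ y a) x) ᵥ* jac ψ x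
      + (2⁻¹ : ℝ) • grad (fun y => (cField ψ y).trace) x := by
  have hψa (a : Fin 3) : ContDiffAt ℝ 2 (fun y => ψ y a) x := contDiffAt_pi.1 hψ a
  have hdiff : ∀ᶠ y in 𝓝 x, DifferentiableAt ℝ ψ y :=
    (hψ.eventually (by simp)).mono fun y hy => hy.differentiableAt two_ne_zero
  have hgrad (a : Fin 3) := differentiableAt_grad (hψa a)
  ext i
  have hrow : (fun y => cField ψ y i) =ᶠ[𝓝 x]
      fun y => ∑ a, pderiv i (fun y => ψ y a) y • grad (fun y => ψ y a) y :=
    hdiff.mono fun y hy => cField_row hy i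
  have htrace : (fun y => (cField ψ y).trace) =ᶠ[𝓝 x]
      fun y => ∑ a, grad (fun y => ψ y a) y ⬝ᵥ grad (fun y => ψ y a) y :=
    hdiff.mono fun y hy => trace_cField hy
  have hsq (a : Fin 3) : DifferentiableAt ℝ
      (fun y => grad (fun y => ψ y a) y ⬝ᵥ grad (fun y => ψ y a) y) x :=
    DifferentiableAt.fun_sum fun j _ =>
      (differentiableAt_pi.1 (hgrad a) j).fun_mul (differentiableAt_pi.1 (hgrad a) j)
  have hgrad_trace : grad (fun y => (cField ψ y).trace) x i
      = ∑ a, pderiv i (fun y => grad (fun y => ψ y a) y ⬝ᵥ grad (fun y => ψ y a) y) x :=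
    (pderiv_congr htrace i).trans (pderiv_fun_sum (fun a _ => hsq a) i)
  change divergence (fun y => cField ψ y i) x = _
  rw [divergence_congr hrow, divergence_fun_sum fun a _ =>
    (differentiableAt_pderiv (hψa a) i).fun_smul (hgrad a)]
  simp only [divergence_pderiv_smul_grad (hψa _), Finset.sum_add_distrib]
  rw [Pi.add_apply, Pi.smul_apply, hgrad_trace, ← Finset.sum_div, smul_eq_mul, div_eq_inv_mul,
    vecMul, dotProduct]
  simp only [jac_row hdiff.self_of_nhds, grad, mul_comm]

lemma divergence_mulVec_comp {F : Matrix (Fin 3) (Fin 3) ℝ} {u : (Fin 3 → ℝ) → Fin 3 → ℝ}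
    (hψ : DifferentiableAt ℝ ψ x) (hu : DifferentiableAt ℝ u (ψ x)) (hF : jac ψ x * F = 1) :
    divergence (fun y => F *ᵥ u (ψ y)) x = divergence u (ψ x) := by
  have hul (l : Fin 3) := differentiableAt_pi.1 hu l
  have hcomp (l : Fin 3) : DifferentiableAt ℝ (fun y => u (ψ y) l) x := (hul l).comp x hψ
  have hpderiv (j : Fin 3) : pderiv j (fun y => (F *ᵥ u (ψ y)) j) x
      = ∑ l, (grad (fun y => u y l) (ψ x) ᵥ* jac ψ x) j * F j l := by
    simp only [mulVec, dotProduct]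
    rw [pderiv_fun_sum fun l _ => (hcomp l).const_mul (F j l)]
    refine Finset.sum_congr rfl fun l _ => ?_
    rw [pderiv_fun_mul (differentiableAt_const _) (hcomp l), pderiv_const,
      ← grad_comp_jac hψ (hul l), grad]
    ring
  calc divergence (fun y => F *ᵥ u (ψ y)) x
      = ∑ l, (grad (fun y => u y l) (ψ x) ᵥ* (jac ψ x * F)) l := by
        simp only [divergence, hpderiv, ← vecMul_vecMul]
        exact Finset.sum_comm
    _ = divergence u (ψ x) := by simp only [hF, vecMul_one, grad, divergence]

lemma mdiv_mul_comp_mul_transpose {A F : Matrix (Fin 3) (Fin 3) ℝ}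
    {T : (Fin 3 → ℝ) → Matrix (Fin 3) (Fin 3) ℝ} (hψ : DifferentiableAt ℝ ψ x)
    (hT : ∀ i, DifferentiableAt ℝ (fun y => T y i) (ψ x)) (hF : jac ψ x * F = 1) :
    mdiv (fun y => A * T (ψ y) * Fᵀ) x = A *ᵥ mdiv T (ψ x) := by
  ext i
  have hrow : DifferentiableAt ℝ (fun y => A i ᵥ* T y) (ψ x) := by
    simp only [vecMul_eq_sum]
    exact DifferentiableAt.fun_sum fun k _ => (hT k).fun_const_smul _
  have hconst (k : Fin 3) : grad (fun _ => A i k) (ψ x) = 0 := funext fun j => pderiv_const _ j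
  calc mdiv (fun y => A * T (ψ y) * Fᵀ) x i
      = divergence (fun y => F *ᵥ (A i ᵥ* T (ψ y))) x := by
        simp only [← vecMul_transpose, ← mul_apply_eq_vecMul]
        rfl
    _ = divergence (fun y => A i ᵥ* T y) (ψ x) := divergence_mulVec_comp hψ hrow hF
    _ = (A *ᵥ mdiv T (ψ x)) i := by
        rw [divergence_vecMul (differentiableAt_const _) hT]
        simp only [hconst, zero_dotProduct, add_zero]
        rfl

end Kinematics

section Universality

variable {ψ : (Fin 3 → ℝ) → Fin 3 → ℝ} {σ0 : (Fin 3 → ℝ) → Matrix (Fin 3) (Fin 3) ℝ}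
  {U : Set (Fin 3 → ℝ)} {x y : Fin 3 → ℝ}

lemma trace_sq_sub_trace_mul_self_div_two {A : Matrix (Fin 3) (Fin 3) ℝ} (hA : A.det ≠ 0) :
    (A.trace ^ 2 - (A * A).trace) / 2 = A.det * A⁻¹.trace := by
  have hadj : (A.trace ^ 2 - (A * A).trace) / 2 = A.adjugate.trace := by
    simp only [adjugate_fin_three, trace_fin_three, mul_apply, Fin.sum_univ_three, of_apply,
      cons_val', cons_val_zero, cons_val_one, cons_val]
    ring
  rw [hadj, inv_def, trace_smul, smul_eq_mul, Ring.inverse_eq_inv', mul_inv_cancel_left₀ hA]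

lemma bField_eq_inv_cField (ψ : (Fin 3 → ℝ) → Fin 3 → ℝ) (x : Fin 3 → ℝ) :
    bField ψ x = (cField ψ x)⁻¹ := by
  rw [bField, cField, Matrix.mul_inv_rev, transpose_nonsing_inv]

lemma det_bField (ψ : (Fin 3 → ℝ) → Fin 3 → ℝ) (x : Fin 3 → ℝ) :
    (bField ψ x).det = ((jac ψ x).det ^ 2)⁻¹ := by
  rw [bField_eq_inv_cField, det_nonsing_inv, Ring.inverse_eq_inv', cField, det_mul, det_transpose,
    sq]

lemma invariants_one_eq (hdet : (jac ψ x).det ≠ 0) (σ : Matrix (Fin 3) (Fin 3) ℝ) :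
    invariants (bField ψ x) σ 1 = invariants (bField ψ x) σ 2 * (cField ψ x).trace := by
  have hb : (bField ψ x).det ≠ 0 := by
    rw [det_bField]
    exact inv_ne_zero (pow_ne_zero 2 hdet)
  have hc : IsUnit (cField ψ x).det := by
    rw [cField, det_mul, det_transpose]
    exact (mul_ne_zero hdet hdet).isUnit
  change ((bField ψ x).trace ^ 2 - (bField ψ x * bField ψ x).trace) / 2 = (bField ψ x).det * _
  rw [trace_sq_sub_trace_mul_self_div_two hb, bField_eq_inv_cField, nonsing_inv_nonsing_inv _ hc]

lemma differentiableAt_det_bField (hψ : ContDiffAt ℝ 2 ψ x) (hdet : (jac ψ x).det ≠ 0) :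
    DifferentiableAt ℝ (fun y => (bField ψ y).det) x := by
  have hjac := differentiableAt_jac hψ
  have hdetjac : DifferentiableAt ℝ (fun y => (jac ψ y).det) x := by
    simp only [det_fin_three]
    fun_prop
  simp only [det_bField]
  exact (hdetjac.fun_pow 2).fun_inv (pow_ne_zero 2 hdet)

lemma differentiableAt_trace_cField (hψ : ContDiffAt ℝ 2 ψ x) :
    DifferentiableAt ℝ (fun y => (cField ψ y).trace) x := by
  have hjac := differentiableAt_jac hψ
  simp only [cField, trace, diag, mul_apply, transpose_apply]
  fun_prop

lemma mdiv_smul_one (f : (Fin 3 → ℝ) → ℝ) (x : Fin 3 → ℝ) :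
    mdiv (fun y => f y • (1 : Matrix (Fin 3) (Fin 3) ℝ)) x = grad f x := by
  ext i
  rw [mdiv, Finset.sum_eq_single i (fun j _ hj => by simp [one_apply_ne' hj]) (by simp)]
  simp [grad, pderiv]

lemma contDiff_pi_single_apply {κ : Type*} [DecidableEq κ] {E : Type*} [NormedAddCommGroup E]
    [NormedSpace ℝ E] {n : WithTop ℕ∞} {f : E → ℝ} (hf : ContDiff ℝ n f) (m i : κ) :
    ContDiff ℝ n ((Pi.single m f : κ → E → ℝ) i) := by
  rcases eq_or_ne i m with rfl | him
  · simpa only [Pi.single_eq_same] using hf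
  · rw [Pi.single_eq_of_ne him]
    exact contDiff_const

lemma eq_of_grad_eq_zero {ι : Type*} [Finite ι] [DecidableEq ι] {V : Set (ι → ℝ)}
    {f : (ι → ℝ) → ℝ} (hV : IsOpen V) (hVc : IsPreconnected V)
    (hf : ∀ x ∈ V, DifferentiableAt ℝ f x) (hgrad : ∀ x ∈ V, grad f x = 0) {x y : ι → ℝ}
    (hx : x ∈ V) (hy : y ∈ V) : f x = f y := by
  cases nonempty_fintype ι
  exact hV.is_const_of_fderiv_eq_zero hVc (fun z hz => (hf z hz).differentiableWithinAt)
    (fun z hz => grad_eq_zero_iff.1 (hgrad z hz)) hx hy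

namespace IsUniversal

lemma grad_invariants (h : IsUniversal U ψ σ0) (hx : x ∈ U) (n : Fin 10) :
    grad (fun y => invariants (bField ψ y) (σ0 y) n) x = 0 := by
  rw [← mdiv_smul_one, ← h (Pi.single 0 fun I => I n)
    (contDiff_pi_single_apply (contDiff_apply ℝ ℝ n) 0) x hx]
  simp [cauchyStress]

lemma mdiv_cField (h : IsUniversal U ψ σ0) (hx : x ∈ U) : mdiv (cField ψ) x = 0 := by
  rw [← h (Pi.single 2 1) (contDiff_pi_single_apply contDiff_const 2) x hx]
  simp [cauchyStress]

lemma mdiv_mul_self (h : IsUniversal U ψ σ0) (hx : x ∈ U) :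
    mdiv (fun y => σ0 y * σ0 y) x = 0 := by
  rw [← h (Pi.single 4 1) (contDiff_pi_single_apply contDiff_const 4) x hx]
  simp [cauchyStress]

lemma invariants_eq (h : IsUniversal U ψ σ0) (hU : IsOpen U) (hUc : IsPreconnected U) {n : Fin 10}
    (hdiff : ∀ x ∈ U, DifferentiableAt ℝ (fun y => invariants (bField ψ y) (σ0 y) n) x)
    (hx : x ∈ U) (hy : y ∈ U) :
    invariants (bField ψ x) (σ0 x) n = invariants (bField ψ y) (σ0 y) n :=
  eq_of_grad_eq_zero hU hUc hdiff (fun _ hz => h.grad_invariants hz n) hx hy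

lemma trace_cField_eq (h : IsUniversal U ψ σ0) (hU : IsOpen U) (hUc : IsPreconnected U)
    (hψ : ∀ x ∈ U, ContDiffAt ℝ 2 ψ x) (hdet : ∀ x ∈ U, (jac ψ x).det ≠ 0)
    (hx : x ∈ U) (hy : y ∈ U) : (cField ψ x).trace = (cField ψ y).trace := by
  have hdiff₂ (z) (hz : z ∈ U) := differentiableAt_det_bField (hψ z hz) (hdet z hz)
  have hdiff₁ (z) (hz : z ∈ U) :
      DifferentiableAt ℝ (fun y => invariants (bField ψ y) (σ0 y) 1) z :=
    ((hdiff₂ z hz).fun_mul (differentiableAt_trace_cField (hψ z hz))).congr_of_eventuallyEq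
      (eventually_of_mem (hU.mem_nhds hz) fun y hy => invariants_one_eq (hdet y hy) (σ0 y))
  have h₁ := h.invariants_eq hU hUc hdiff₁ hx hy
  rw [invariants_one_eq (hdet x hx), invariants_one_eq (hdet y hy),
    h.invariants_eq (n := 2) hU hUc hdiff₂ hx hy] at h₁
  refine mul_left_cancel₀ ?_ h₁
  change (bField ψ y).det ≠ 0
  rw [det_bField]
  exact inv_ne_zero (pow_ne_zero 2 (hdet y hy))

lemma laplacian_eq_zero (h : IsUniversal U ψ σ0) (hU : IsOpen U) (hUc : IsPreconnected U)
    (hψ : ∀ x ∈ U, ContDiffAt ℝ 2 ψ x) (hdet : ∀ x ∈ U, (jac ψ x).det ≠ 0) (hx : x ∈ U)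
    (a : Fin 3) : laplacian (fun y => ψ y a) x = 0 := by
  have htrace : (fun y => (cField ψ y).trace) =ᶠ[𝓝 x] fun _ => (cField ψ x).trace :=
    eventually_of_mem (hU.mem_nhds hx) fun y hy => h.trace_cField_eq hU hUc hψ hdet hy hx
  have hgrad : grad (fun y => (cField ψ y).trace) x = 0 :=
    funext fun j => (pderiv_congr htrace j).trans (pderiv_const _ j)
  have hdiv := h.mdiv_cField hx
  rw [_root_.mdiv_cField (hψ x hx), hgrad, smul_zero, add_zero] at hdiv
  exact congrFun (eq_zero_of_vecMul_eq_zero (hdet x hx) hdiv) a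

lemma grad_jac_eq_zero (h : IsUniversal U ψ σ0) (hU : IsOpen U) (hUc : IsPreconnected U)
    (hψ : ∀ x ∈ U, ContDiffAt ℝ 3 ψ x) (hdet : ∀ x ∈ U, (jac ψ x).det ≠ 0) (hx : x ∈ U)
    (a j : Fin 3) : grad (pderiv j fun y => ψ y a) x = 0 := by
  have hψ2 (z) (hz : z ∈ U) : ContDiffAt ℝ 2 ψ z := (hψ z hz).of_le (by norm_num)
  have hψa (a : Fin 3) : ContDiffAt ℝ 3 (fun y => ψ y a) x := contDiffAt_pi.1 (hψ x hx) a
  refine grad_eq_zero_of_harmonic_of_sum_sq_eventually_const (κ := Fin 3 × Fin 3)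
    (F := fun p => pderiv p.2 fun y => ψ y p.1) (c := (cField ψ x).trace)
    (fun p => contDiffAt_pderiv (hψa p.1) (by norm_num) p.2) (fun p => ?_) ?_ (a, j)
  · have hharm : laplacian (fun y => ψ y p.1) =ᶠ[𝓝 x] fun _ => 0 :=
      eventually_of_mem (hU.mem_nhds hx) fun y hy => h.laplacian_eq_zero hU hUc hψ2 hdet hy p.1
    rw [laplacian_pderiv (hψa p.1), pderiv_congr hharm, pderiv_const]
  · filter_upwards [hU.mem_nhds hx] with y hy
    rw [← h.trace_cField_eq hU hUc hψ2 hdet hy hx,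
      trace_cField ((hψ2 y hy).differentiableAt two_ne_zero), Fintype.sum_prod_type]
    simp only [dotProduct, grad, sq]

lemma jac_eq (h : IsUniversal U ψ σ0) (hU : IsOpen U) (hUc : IsPreconnected U)
    (hψ : ∀ x ∈ U, ContDiffAt ℝ 3 ψ x) (hdet : ∀ x ∈ U, (jac ψ x).det ≠ 0) (hx : x ∈ U)
    (hy : y ∈ U) : jac ψ x = jac ψ y := by
  have hψd (z) (hz : z ∈ U) := (hψ z hz).differentiableAt three_ne_zero
  ext a j
  rw [jac_row (hψd x hx), jac_row (hψd y hy)]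
  refine eq_of_grad_eq_zero hU hUc (fun z hz => ?_)
    (fun z hz => h.grad_jac_eq_zero hU hUc hψ hdet hz a j) hx hy
  exact differentiableAt_pderiv (contDiffAt_pi.1 ((hψ z hz).of_le (by norm_num)) a) j

lemma trace_mul_self_eq (h : IsUniversal U ψ σ0) (hU : IsOpen U) (hUc : IsPreconnected U)
    (hσ0 : ∀ x ∈ U, ∀ i j, DifferentiableAt ℝ (fun y => σ0 y i j) x) (hx : x ∈ U) (hy : y ∈ U) :
    (σ0 x * σ0 x).trace = (σ0 y * σ0 y).trace := by
  refine h.invariants_eq (n := 4) hU hUc (fun z hz => ?_) hx hy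
  change DifferentiableAt ℝ (fun y => (σ0 y * σ0 y).trace) z
  have := hσ0 z hz
  simp only [trace, diag, mul_apply]
  fun_prop

end IsUniversal

end Universality

lemma contDiffOn_mul_apply {ι E : Type*} [Fintype ι] [NormedAddCommGroup E] [NormedSpace ℝ E]
    {n : WithTop ℕ∞} {s : Set E} {A B : E → Matrix ι ι ℝ}
    (hA : ∀ i j, ContDiffOn ℝ n (fun x => A x i j) s)
    (hB : ∀ i j, ContDiffOn ℝ n (fun x => B x i j) s) (i j : ι) :
    ContDiffOn ℝ n (fun x => (A x * B x) i j) s := by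
  simp only [mul_apply]
  exact ContDiffOn.sum fun k _ => (hA i k).mul (hB k j)

lemma contDiffOn_mul_const_mul_self {ι E : Type*} [Fintype ι] [NormedAddCommGroup E]
    [NormedSpace ℝ E] {n : WithTop ℕ∞} {s : Set E} {A : E → Matrix ι ι ℝ}
    (hA : ∀ i j, ContDiffOn ℝ n (fun x => A x i j) s) (B : Matrix ι ι ℝ) (i : ι) :
    ContDiffOn ℝ n (fun x => (A x * B * A x) i) s :=
  contDiffOn_pi.2 fun j =>
    contDiffOn_mul_apply (contDiffOn_mul_apply hA fun k l => contDiffOn_const (c := B k l)) hA i j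

lemma eq_zero_of_trace_mul_self_nonpos {ι : Type*} [Fintype ι] {A : Matrix ι ι ℝ} (hA : A.IsSymm)
    (htrace : (A * A).trace ≤ 0) : A = 0 := by
  have hstar : Aᴴ * A = A * A := by rw [conjTranspose_eq_transpose_of_trivial, hA.eq]
  rw [← trace_conjTranspose_mul_self_eq_zero_iff]
  exact le_antisymm (hstar ▸ htrace) (posSemidef_conjTranspose_mul_self A).trace_nonneg

lemma IsDefiningFunction.eq_zero_of_trace_pushforward_sq_eq {ι : Type*} [Fintype ι]
    [DecidableEq ι] {ρ : (ι → ℝ) → ℝ} {S : (ι → ℝ) → Matrix ι ι ℝ} {F : Matrix ι ι ℝ} {k : ℝ}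
    {X : ι → ℝ} (hρ : IsDefiningFunction ρ)
    (hS : ∀ i j, ContDiffOn ℝ 1 (fun Y => S Y i j) {Y | ρ Y < 1})
    (hcont : ContinuousOn S {Y | ρ Y ≤ 1}) (hsymm : ∀ Y, ρ Y < 1 → (S Y).IsSymm)
    (htraction : ∀ Y, ρ Y = 1 → S Y *ᵥ grad ρ Y = 0) (hF : IsUnit F)
    (hdiv : ∀ Y, ρ Y < 1 → ∀ i, divergence (fun Z => (S Z * (Fᵀ * F) * S Z) i) Y = 0)
    (htrace : ∀ Y, ρ Y < 1 → (F * S Y * Fᵀ * (F * S Y * Fᵀ)).trace = k) (hX : ρ X < 1) :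
    S X = 0 := by
  have hk : k ≤ 0 := by
    refine hρ.nonpos_of_le_trace_mul_transpose hX (T := fun Y => S Y * (Fᵀ * F) * S Y)
      (contDiffOn_mul_const_mul_self hS _) ((hcont.mul continuousOn_const).mul hcont) hdiv
      (fun Y hY => ?_) (Fᵀ * F) fun Y hY => ?_
    · rw [← mulVec_mulVec, htraction Y hY, mulVec_zero]
    · rw [← htrace Y hY, transpose_mul, transpose_transpose]
      simp only [Matrix.mul_assoc]
      rw [trace_mul_comm F]
      simp only [Matrix.mul_assoc, le_refl]
  have hσ : F * S X * Fᵀ = 0 := by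
    refine eq_zero_of_trace_mul_self_nonpos ?_ ((htrace X hX).trans_le hk)
    simp only [IsSymm, transpose_mul, transpose_transpose, (hsymm X hX).eq, Matrix.mul_assoc]
  exact hF.mul_right_eq_zero.1 (((isUnit_transpose F).2 hF).mul_left_eq_zero.1 hσ)

section Deformation

variable {φ ψ : (Fin 3 → ℝ) → Fin 3 → ℝ} {σ0 S : (Fin 3 → ℝ) → Matrix (Fin 3) (Fin 3) ℝ}
  {Ω : Set (Fin 3 → ℝ)} {F : Matrix (Fin 3) (Fin 3) ℝ} {x X Y : Fin 3 → ℝ}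

/-- `φ` is a regular deformation of the body `Ω` and `ψ` is its inverse map. The regularity `C³` is
what makes the entries of `jac ψ` twice differentiable. -/
structure IsDeformation (Ω : Set (Fin 3 → ℝ)) (φ ψ : (Fin 3 → ℝ) → Fin 3 → ℝ) : Prop where
  isOpen : IsOpen Ω
  contDiffOn : ContDiffOn ℝ 3 φ Ω
  det_jac_ne_zero : ∀ X ∈ Ω, (jac φ X).det ≠ 0
  leftInvOn : Set.LeftInvOn ψ φ Ω

namespace IsDeformation

lemma contDiffAt (hφ : IsDeformation Ω φ ψ) (hX : X ∈ Ω) : ContDiffAt ℝ 3 φ X :=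
  hφ.contDiffOn.contDiffAt (hφ.isOpen.mem_nhds hX)

lemma eventually_leftInverse (hφ : IsDeformation Ω φ ψ) (hX : X ∈ Ω) :
    ∀ᶠ Y in 𝓝 X, ψ (φ Y) = Y :=
  eventually_of_mem (hφ.isOpen.mem_nhds hX) hφ.leftInvOn

lemma isOpen_image (hφ : IsDeformation Ω φ ψ) : IsOpen (φ '' Ω) :=
  isOpen_image_of_det_jac_ne_zero hφ.isOpen (hφ.contDiffOn.of_le (by norm_num)) hφ.det_jac_ne_zero

lemma contDiffAt_inverse (hφ : IsDeformation Ω φ ψ) (hX : X ∈ Ω) : ContDiffAt ℝ 3 ψ (φ X) :=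
  contDiffAt_leftInverse three_ne_zero (hφ.contDiffAt hX) (hφ.det_jac_ne_zero X hX)
    (hφ.eventually_leftInverse hX)

lemma jac_inverse_mul_jac (hφ : IsDeformation Ω φ ψ) (hX : X ∈ Ω) :
    jac ψ (φ X) * jac φ X = 1 :=
  jac_leftInverse_mul_jac ((hφ.contDiffAt hX).differentiableAt three_ne_zero)
    ((hφ.contDiffAt_inverse hX).differentiableAt three_ne_zero) (hφ.eventually_leftInverse hX)

lemma jac_eq_of_isUniversal (hφ : IsDeformation Ω φ ψ) (hΩ : IsPreconnected Ω)
    (h : IsUniversal (φ '' Ω) ψ σ0) (hX : X ∈ Ω) (hY : Y ∈ Ω) : jac φ X = jac φ Y := by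
  have hψjac : jac ψ (φ X) = jac ψ (φ Y) :=
    h.jac_eq hφ.isOpen_image (hΩ.image φ hφ.contDiffOn.continuousOn)
      (Set.forall_mem_image.2 fun _ hZ => hφ.contDiffAt_inverse hZ)
      (Set.forall_mem_image.2 fun _ hZ => det_ne_zero_of_right_inverse (hφ.jac_inverse_mul_jac hZ))
      (Set.mem_image_of_mem φ hX) (Set.mem_image_of_mem φ hY)
  rw [← inv_eq_right_inv (hφ.jac_inverse_mul_jac hX), hψjac,
    inv_eq_right_inv (hφ.jac_inverse_mul_jac hY)]

lemma eventually_eq_pushforward (hφ : IsDeformation Ω φ ψ)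
    (hσ0 : ∀ X ∈ Ω, σ0 (φ X) = F * S X * Fᵀ) (hX : X ∈ Ω) :
    ∀ᶠ y in 𝓝 (φ X), σ0 y = F * S (ψ y) * Fᵀ := by
  filter_upwards [hφ.isOpen_image.mem_nhds (Set.mem_image_of_mem φ hX)]
  rintro _ ⟨Y, hY, rfl⟩
  rw [hσ0 Y hY, hφ.leftInvOn hY]

lemma differentiableAt_pushforward (hφ : IsDeformation Ω φ ψ)
    (hS : ∀ i j, ContDiffOn ℝ 1 (fun X => S X i j) Ω)
    (hσ0 : ∀ X ∈ Ω, σ0 (φ X) = F * S X * Fᵀ) (hX : X ∈ Ω) (i j : Fin 3) :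
    DifferentiableAt ℝ (fun y => σ0 y i j) (φ X) := by
  have hSψ (k l : Fin 3) : DifferentiableAt ℝ (fun y => S (ψ y) k l) (φ X) := by
    have hSX := ((hS k l).contDiffAt (hφ.isOpen.mem_nhds hX)).differentiableAt one_ne_zero
    rw [← hφ.leftInvOn hX] at hSX
    exact hSX.comp (φ X) ((hφ.contDiffAt_inverse hX).differentiableAt three_ne_zero)
  refine DifferentiableAt.congr_of_eventuallyEq (f := fun y => (F * S (ψ y) * Fᵀ) i j) ?_
    ((hφ.eventually_eq_pushforward hσ0 hX).mono fun y hy => congrFun₂ hy i j)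
  simp only [mul_apply]
  exact DifferentiableAt.fun_sum fun l _ =>
    (DifferentiableAt.fun_sum fun k _ => (hSψ k l).const_mul _).mul_const _

lemma mdiv_pullback_sq_eq_zero (hφ : IsDeformation Ω φ ψ) (h : IsUniversal (φ '' Ω) ψ σ0)
    (hjac : ∀ X ∈ Ω, jac φ X = F) (hS : ∀ i j, ContDiffOn ℝ 1 (fun X => S X i j) Ω)
    (hσ0 : ∀ X ∈ Ω, σ0 (φ X) = F * S X * Fᵀ) (hX : X ∈ Ω) :
    mdiv (fun Y => S Y * (Fᵀ * F) * S Y) X = 0 := by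
  have hinv : jac ψ (φ X) * F = 1 := hjac X hX ▸ hφ.jac_inverse_mul_jac hX
  have hT (i : Fin 3) : DifferentiableAt ℝ (fun Y => (S Y * (Fᵀ * F) * S Y) i) (ψ (φ X)) := by
    rw [hφ.leftInvOn hX]
    exact ((contDiffOn_mul_const_mul_self hS _ i).contDiffAt
      (hφ.isOpen.mem_nhds hX)).differentiableAt one_ne_zero
  have hsq : (fun y => σ0 y * σ0 y) =ᶠ[𝓝 (φ X)]
      fun y => F * (S (ψ y) * (Fᵀ * F) * S (ψ y)) * Fᵀ := by
    filter_upwards [hφ.eventually_eq_pushforward hσ0 hX] with y hy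
    simp only [hy, Matrix.mul_assoc]
  have hF : F *ᵥ mdiv (fun Y => S Y * (Fᵀ * F) * S Y) X = 0 := by
    calc F *ᵥ mdiv (fun Y => S Y * (Fᵀ * F) * S Y) X
        = mdiv (fun y => F * (S (ψ y) * (Fᵀ * F) * S (ψ y)) * Fᵀ) (φ X) := by
          rw [mdiv_mul_comp_mul_transpose
            ((hφ.contDiffAt_inverse hX).differentiableAt three_ne_zero) hT hinv, hφ.leftInvOn hX]
      _ = mdiv (fun y => σ0 y * σ0 y) (φ X) :=
          funext fun i => (divergence_congr (hsq.mono fun _ hy => congrFun hy i)).symm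
      _ = 0 := h.mdiv_mul_self (Set.mem_image_of_mem φ hX)
  rw [← one_mulVec (mdiv _ X), ← hinv, ← mulVec_mulVec, hF, mulVec_zero]

end IsDeformation

end Deformation

section SumSq

variable {ι : Type*} [Fintype ι]

lemma isCompact_setOf_sum_sq_le_one : IsCompact {X : ι → ℝ | ∑ i, X i ^ 2 ≤ 1} := by
  refine Metric.isCompact_of_isClosed_isBounded (isClosed_le (by fun_prop) continuous_const)
    ((Metric.isBounded_closedBall (x := 0) (r := 1)).subset fun X hX => ?_)
  rw [mem_closedBall_zero_iff, pi_norm_le_iff_of_nonneg zero_le_one]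
  intro i
  exact (sq_le_one_iff_abs_le_one (X i)).1
    ((Finset.single_le_sum (fun i _ => sq_nonneg (X i)) (Finset.mem_univ i)).trans hX)

lemma convex_setOf_sum_sq_lt_one : Convex ℝ {X : ι → ℝ | ∑ i, X i ^ 2 < 1} := by
  have hconv : ConvexOn ℝ Set.univ fun X : ι → ℝ => ∑ i, X i ^ 2 := by
    refine ⟨convex_univ, fun X _ Y _ a b ha hb hab => ?_⟩
    simp only [smul_eq_mul, Finset.mul_sum, ← Finset.sum_add_distrib]
    exact Finset.sum_le_sum fun i _ =>
      (even_two.convexOn_pow (𝕜 := ℝ)).2 (Set.mem_univ _) (Set.mem_univ _) ha hb hab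
  simpa using hconv.convex_lt 1

variable [DecidableEq ι]

lemma grad_sum_sq (X : ι → ℝ) : grad (fun Y => ∑ i, Y i ^ 2) X = (2 : ℝ) • X := by
  ext j
  have hcoord (i : ι) : DifferentiableAt ℝ (fun Y : ι → ℝ => Y i) X := differentiableAt_apply i X
  have hpderiv (i : ι) : pderiv j (fun Y => Y i) X = (Pi.single j 1 : ι → ℝ) i := by
    simp [pderiv, fderiv_apply]
  simp only [grad, sq]
  rw [pderiv_fun_sum fun i _ => (hcoord i).fun_mul (hcoord i)]
  simp only [pderiv_fun_mul (hcoord _) (hcoord _), hpderiv]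
  rw [Finset.sum_eq_single j (fun i _ hij => by simp [hij]) (by simp)]
  simp only [Pi.single_eq_same, mul_one, Pi.smul_apply, smul_eq_mul, two_mul]

lemma isDefiningFunction_sum_sq : IsDefiningFunction fun X : ι → ℝ => ∑ i, X i ^ 2 where
  contDiff := by fun_prop
  isCompact := isCompact_setOf_sum_sq_le_one
  grad_ne_zero X hX hgrad := by
    rw [grad_sum_sq] at hgrad
    have hX0 : X = 0 := (smul_eq_zero.1 hgrad).resolve_left two_ne_zero
    simp [hX0] at hX

end SumSq

theorem no_universal_deformation_with_nontrivial_residual_stress_general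
    {ρ : (Fin 3 → ℝ) → ℝ} {φ ψ : (Fin 3 → ℝ) → Fin 3 → ℝ}
    {S σ0 : (Fin 3 → ℝ) → Matrix (Fin 3) (Fin 3) ℝ} (hρ : IsDefiningFunction ρ)
    (hconn : IsPreconnected {X | ρ X < 1}) (hφ : IsDeformation {X | ρ X < 1} φ ψ)
    (hScont : ∀ i j, ContinuousOn (fun X => S X i j) {X | ρ X ≤ 1})
    (hS : ∀ i j, ContDiffOn ℝ 1 (fun X => S X i j) {X | ρ X < 1})
    (hSsymm : ∀ X, ρ X < 1 → (S X).IsSymm)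
    (hStraction : ∀ X, ρ X = 1 → S X *ᵥ grad ρ X = 0)
    (hσ0 : ∀ X, ρ X < 1 → σ0 (φ X) = jac φ X * S X * (jac φ X)ᵀ)
    (huniv : IsUniversal (φ '' {X | ρ X < 1}) ψ σ0) :
    (∀ X, ρ X < 1 → ∀ Y, ρ Y < 1 → jac φ X = jac φ Y) ∧ ∀ X, ρ X ≤ 1 → S X = 0 := by
  have hjac (X) (hX : ρ X < 1) (Y) (hY : ρ Y < 1) : jac φ X = jac φ Y :=
    hφ.jac_eq_of_isUniversal hconn huniv hX hY
  have hScont' : ContinuousOn S {X | ρ X ≤ 1} :=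
    continuousOn_pi.2 fun i => continuousOn_pi.2 fun j => hScont i j
  refine ⟨hjac, Set.EqOn.of_subset_closure (fun X hX => ?_) hScont' continuousOn_const
    (fun X (hX : ρ X < 1) => hX.le) hρ.subset_closure⟩
  have hσX (Y) (hY : ρ Y < 1) : σ0 (φ Y) = jac φ X * S Y * (jac φ X)ᵀ := by
    rw [hσ0 Y hY, hjac Y hY X hX]
  refine hρ.eq_zero_of_trace_pushforward_sq_eq hS hScont' hSsymm hStraction
    ((isUnit_iff_isUnit_det _).2 (hφ.det_jac_ne_zero X hX).isUnit)
    (fun Y hY => congrFun (hφ.mdiv_pullback_sq_eq_zero huniv (fun Z hZ => hjac Z hZ X hX)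
      hS hσX hY)) (k := (σ0 (φ X) * σ0 (φ X)).trace) (fun Y hY => ?_) hX
  rw [← hσX Y hY]
  exact huniv.trace_mul_self_eq hφ.isOpen_image (hconn.image φ hφ.contDiffOn.continuousOn)
    (Set.forall_mem_image.2 fun _ hZ => hφ.differentiableAt_pushforward hS hσX hZ)
    (Set.mem_image_of_mem φ hY) (Set.mem_image_of_mem φ hX)

/-- Let `φ` be a smooth diffeomorphism of the open unit ball `B` onto
`U = φ(B)` with invertible derivative, such that `φ` and `Dφ` extend continuously to the
closed ball, and let `S̊` be a symmetric residual stress, continuous on the closed ball,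
smooth inside, and traction-free on the boundary (`S̊(X)·X = 0` for `|X| = 1`). Define
`σ̊` on `U` by `σ̊(φ(X)) = Dφ(X) S̊(X) Dφ(X)ᵀ`. If `(φ⁻¹, σ̊)` is universal, then `Dφ`
is constant on `B` and `S̊ = 0` on the closed ball: a non-trivial residual stress admits
no universal deformations, and in the residual-stress-free case the universal
deformations are exactly the homogeneous ones. -/
theorem no_universal_deformation_with_nontrivial_residual_stress
    (φ ψ : (Fin 3 → ℝ) → (Fin 3 → ℝ))
    (hφ : ContDiffOn ℝ (⊤ : ℕ∞) φ unitBall)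
    (hφinj : Set.InjOn φ unitBall)
    (hφdet : ∀ X ∈ unitBall, (jac φ X).det ≠ 0)
    (hUopen : IsOpen (φ '' unitBall))
    (hφcont : ContinuousOn φ unitClosedBall)
    (hDφext : ∃ F : (Fin 3 → ℝ) → Matrix (Fin 3) (Fin 3) ℝ,
      (∀ i j, ContinuousOn (fun X => F X i j) unitClosedBall) ∧
        ∀ X ∈ unitBall, F X = jac φ X)
    (hψ : ∀ X ∈ unitBall, ψ (φ X) = X)
    (S : (Fin 3 → ℝ) → Matrix (Fin 3) (Fin 3) ℝ)
    (hScont : ∀ i j, ContinuousOn (fun X => S X i j) unitClosedBall)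
    (hSsmooth : ∀ i j, ContDiffOn ℝ (⊤ : ℕ∞) (fun X => S X i j) unitBall)
    (hSsym : ∀ X ∈ unitClosedBall, (S X)ᵀ = S X)
    (hStraction : ∀ X : Fin 3 → ℝ, (∑ i, X i ^ 2) = 1 → (S X).mulVec X = 0)
    (σ0 : (Fin 3 → ℝ) → Matrix (Fin 3) (Fin 3) ℝ)
    (hσ0 : ∀ X ∈ unitBall, σ0 (φ X) = jac φ X * S X * (jac φ X)ᵀ)
    (huniv : IsUniversal (φ '' unitBall) ψ σ0) :
    (∀ X ∈ unitBall, ∀ Y ∈ unitBall, jac φ X = jac φ Y)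
      ∧ (∀ X ∈ unitClosedBall, S X = 0) := by
  have hdef : IsDeformation unitBall φ ψ :=
    ⟨isDefiningFunction_sum_sq.isOpen, contDiffOn_infty.1 hφ 3, hφdet, hψ⟩
  exact no_universal_deformation_with_nontrivial_residual_stress_general isDefiningFunction_sum_sq
    convex_setOf_sum_sq_lt_one.isPreconnected hdef hScont
    (fun i j => (hSsmooth i j).of_le (mod_cast le_top)) (fun X hX => hSsym X (le_of_lt hX))
    (fun X hX => by rw [grad_sum_sq, mulVec_smul, hStraction X hX, smul_zero]) hσ0 huniv
end

section
/- Let U ⊆ ℝ³ be open and connected and let ψ : U → ℝ³ be smooth with invertible derivative Dψ(x) at every point. Set b(x) = Dψ(x)⁻¹ (Dψ(x)⁻¹)ᵀ and c(x) = b(x)⁻¹ = Dψ(x)ᵀ Dψ(x). If the principal invariants I₁ = tr b, I₂ = ((tr b)² − tr(b²))/2, and I₃ = det b are each constant on U and div b = 0 and div c = 0 on U, then Dψ is constant on U, i.e., the deformation is homogeneous (Ericksen's theorem for compressible isotropic solids). -/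
open Matrix

/-!
With `c = Dψᵀ Dψ`, the Baird–Eells stress–energy identity reads
`div (c - ½ (tr c) 1) = Dψᵀ Δψ`. In dimension three `tr c = I₂ / I₃` is constant, so `div c = 0`
forces `Dψᵀ Δψ = 0`, and the components of `ψ` are harmonic. Hence so are the entries of `Dψ`, whose
sum of squares is the constant `tr c`. Bochner's identity `½ Δ|Dψ|² = |D²ψ|² + ⟨Dψ, Δ(Dψ)⟩` then
leaves `D²ψ = 0`.
-/

open Filter
open scoped Topology

section DotProduct

variable {𝕜 D κ : Type*} [NontriviallyNormedField 𝕜] [NormedAddCommGroup D] [NormedSpace 𝕜 D]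
  [Fintype κ] {u v : D → κ → 𝕜} {x : D} {n : WithTop ℕ∞}

lemma differentiableAt_dotProduct (hu : DifferentiableAt 𝕜 u x) (hv : DifferentiableAt 𝕜 v x) :
    DifferentiableAt 𝕜 (fun y => u y ⬝ᵥ v y) x :=
  .fun_sum fun a _ => (differentiableAt_pi.1 hu a).mul (differentiableAt_pi.1 hv a)

lemma contDiffAt_dotProduct (hu : ContDiffAt 𝕜 n u x) (hv : ContDiffAt 𝕜 n v x) :
    ContDiffAt 𝕜 n (fun y => u y ⬝ᵥ v y) x :=
  .sum fun a _ => (contDiffAt_pi.1 hu a).mul (contDiffAt_pi.1 hv a)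

lemma fderiv_dotProduct_apply (hu : DifferentiableAt 𝕜 u x) (hv : DifferentiableAt 𝕜 v x)
    (d : D) : fderiv 𝕜 (fun y => u y ⬝ᵥ v y) x d =
      fderiv 𝕜 u x d ⬝ᵥ v x + u x ⬝ᵥ fderiv 𝕜 v x d := by
  have hprod : HasFDerivAt (fun y => u y ⬝ᵥ v y) _ x := HasFDerivAt.fun_sum fun a _ =>
    (hasFDerivAt_pi'.1 hu.hasFDerivAt a).mul (hasFDerivAt_pi'.1 hv.hasFDerivAt a)
  rw [hprod.fderiv]
  simp [dotProduct, Finset.sum_add_distrib, mul_comm, add_comm]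

end DotProduct

section PartialDerivatives

variable {ι κ s E : Type*} [DecidableEq ι] [NormedAddCommGroup E] [NormedSpace ℝ E]
  {f g : (ι → ℝ) → E} {u v : (ι → ℝ) → κ → ℝ} {x : ι → ℝ} {m n : WithTop ℕ∞}

/-- The partial derivative `∂f/∂xᵢ` of a vector-valued function of the coordinates `(xᵢ)`. -/
noncomputable def partialDeriv (i : ι) (f : (ι → ℝ) → E) (x : ι → ℝ) : E :=
  fderiv ℝ f x (Pi.single i 1)

lemma partialDeriv_const (i : ι) (c : E) : partialDeriv i (fun _ => c) = fun _ => 0 := by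
  ext x
  simp [partialDeriv]

lemma partialDeriv_congr (h : f =ᶠ[𝓝 x] g) (i : ι) :
    partialDeriv i f =ᶠ[𝓝 x] partialDeriv i g :=
  h.fderiv.fun_comp (· (Pi.single i 1))

section Finite

variable [Finite ι]

lemma partialDeriv_add (hf : DifferentiableAt ℝ f x) (hg : DifferentiableAt ℝ g x) (i : ι) :
    partialDeriv i (fun y => f y + g y) x = partialDeriv i f x + partialDeriv i g x := by
  cases nonempty_fintype ι
  simp only [partialDeriv, fderiv_fun_add hf hg, _root_.add_apply]

lemma partialDeriv_sum {f : s → (ι → ℝ) → E} {t : Finset s}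
    (hf : ∀ a ∈ t, DifferentiableAt ℝ (f a) x) (i : ι) :
    partialDeriv i (fun y => ∑ a ∈ t, f a y) x = ∑ a ∈ t, partialDeriv i (f a) x := by
  cases nonempty_fintype ι
  simp only [partialDeriv, fderiv_fun_sum hf, _root_.sum_apply]

lemma partialDeriv_dotProduct [Fintype κ] (hu : DifferentiableAt ℝ u x)
    (hv : DifferentiableAt ℝ v x) (i : ι) : partialDeriv i (fun y => u y ⬝ᵥ v y) x =
      partialDeriv i u x ⬝ᵥ v x + u x ⬝ᵥ partialDeriv i v x := by
  cases nonempty_fintype ι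
  exact fderiv_dotProduct_apply hu hv _

lemma eq_of_partialDeriv_eq_zero {U : Set (ι → ℝ)} (hU : IsOpen U) (hUc : IsPreconnected U)
    (hf : DifferentiableOn ℝ f U) (hf' : ∀ z ∈ U, ∀ i, partialDeriv i f z = 0)
    {y : ι → ℝ} (hx : x ∈ U) (hy : y ∈ U) : f x = f y := by
  cases nonempty_fintype ι
  have fderiv_eq_zero : Set.EqOn (fderiv ℝ f) 0 U := fun z hz =>
    ContinuousLinearMap.coe_injective <| LinearMap.pi_ext' fun i =>
      LinearMap.ext_ring (hf' z hz i)
  exact hU.is_const_of_fderiv_eq_zero hUc hf fderiv_eq_zero hx hy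

end Finite

variable [Fintype ι]

/-- The Laplacian `Δf = ∑ₖ ∂²f/∂xₖ²` in coordinates. The sup norm on `ι → ℝ` does not come from
an inner product, which rules out `InnerProductSpace.laplacian`. -/
noncomputable def coordLaplacian (f : (ι → ℝ) → E) (x : ι → ℝ) : E :=
  ∑ k, partialDeriv k (partialDeriv k f) x

lemma coordLaplacian_const (c : E) : coordLaplacian (fun _ : ι → ℝ => c) x = 0 := by
  simp only [coordLaplacian, partialDeriv_const, Finset.sum_const_zero]

lemma coordLaplacian_congr (h : f =ᶠ[𝓝 x] g) : coordLaplacian f x = coordLaplacian g x :=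
  Finset.sum_congr rfl fun k _ => (partialDeriv_congr (partialDeriv_congr h k) k).eq_of_nhds

lemma contDiffAt_partialDeriv (hf : ContDiffAt ℝ n f x) (hmn : m + 1 ≤ n) (i : ι) :
    ContDiffAt ℝ m (partialDeriv i f) x :=
  (hf.fderiv_right hmn).clm_apply contDiffAt_const

lemma differentiableAt_partialDeriv (hf : ContDiffAt ℝ 2 f x) (i : ι) :
    DifferentiableAt ℝ (partialDeriv i f) x :=
  (contDiffAt_partialDeriv (m := 1) hf (by norm_num) i).differentiableAt one_ne_zero

lemma partialDeriv_comm (hf : ContDiffAt ℝ 2 f x) (i j : ι) :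
    partialDeriv i (partialDeriv j f) x = partialDeriv j (partialDeriv i f) x := by
  have hdf : DifferentiableAt ℝ (fderiv ℝ f) x :=
    (hf.fderiv_right (m := 1) (by norm_num)).differentiableAt one_ne_zero
  have second_partial (k l : ι) : partialDeriv k (partialDeriv l f) x =
      fderiv ℝ (fderiv ℝ f) x (Pi.single k 1) (Pi.single l 1) := by
    unfold partialDeriv
    simp [fderiv_clm_apply hdf (differentiableAt_const _)]
  rw [second_partial, second_partial]
  exact hf.isSymmSndFDerivAt (by simp) _ _

lemma coordLaplacian_sum {f : s → (ι → ℝ) → E} {t : Finset s}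
    (hf : ∀ a ∈ t, ContDiffAt ℝ 2 (f a) x) :
    coordLaplacian (fun y => ∑ a ∈ t, f a y) x = ∑ a ∈ t, coordLaplacian (f a) x := by
  have first_partial (k : ι) : partialDeriv k (fun y => ∑ a ∈ t, f a y) =ᶠ[𝓝 x]
      fun y => ∑ a ∈ t, partialDeriv k (f a) y := by
    have hf' : ∀ᶠ y in 𝓝 x, ∀ a ∈ t, ContDiffAt ℝ 2 (f a) y :=
      (eventually_all_finset t).2 fun a ha => (hf a ha).eventually (by simp)
    filter_upwards [hf'] with y hy
    exact partialDeriv_sum (fun a ha => (hy a ha).differentiableAt two_ne_zero) k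
  simp only [coordLaplacian]
  rw [Finset.sum_comm]
  refine Finset.sum_congr rfl fun k _ => ?_
  rw [(partialDeriv_congr (first_partial k) k).eq_of_nhds]
  exact partialDeriv_sum (fun a ha => differentiableAt_partialDeriv (hf a ha) k) k

lemma coordLaplacian_partialDeriv (hf : ContDiffAt ℝ 3 f x) (i : ι) :
    coordLaplacian (partialDeriv i f) x = partialDeriv i (coordLaplacian f) x := by
  have hf₂ (k : ι) : ContDiffAt ℝ 2 (partialDeriv k f) x :=
    contDiffAt_partialDeriv hf (by norm_num) k
  have swap_inner (k : ι) :
      partialDeriv k (partialDeriv i f) =ᶠ[𝓝 x] partialDeriv i (partialDeriv k f) := by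
    filter_upwards [hf.eventually (by simp)] with y hy
    exact partialDeriv_comm (hy.of_le (by norm_num)) k i
  calc coordLaplacian (partialDeriv i f) x
      = ∑ k, partialDeriv k (partialDeriv i (partialDeriv k f)) x :=
        Finset.sum_congr rfl fun k _ => (partialDeriv_congr (swap_inner k) k).eq_of_nhds
    _ = ∑ k, partialDeriv i (partialDeriv k (partialDeriv k f)) x :=
        Finset.sum_congr rfl fun k _ => partialDeriv_comm (hf₂ k) k i
    _ = partialDeriv i (coordLaplacian f) x :=
        (partialDeriv_sum (fun k _ => differentiableAt_partialDeriv (hf₂ k) k) i).symm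

lemma coordLaplacian_dotProduct [Fintype κ] (hu : ContDiffAt ℝ 2 u x) (hv : ContDiffAt ℝ 2 v x) :
    coordLaplacian (fun y => u y ⬝ᵥ v y) x =
      coordLaplacian u x ⬝ᵥ v x + 2 * ∑ k, partialDeriv k u x ⬝ᵥ partialDeriv k v x +
        u x ⬝ᵥ coordLaplacian v x := by
  have hu₁ (k : ι) : DifferentiableAt ℝ (partialDeriv k u) x :=
    differentiableAt_partialDeriv hu k
  have hv₁ (k : ι) : DifferentiableAt ℝ (partialDeriv k v) x :=
    differentiableAt_partialDeriv hv k
  have hu₀ : DifferentiableAt ℝ u x := hu.differentiableAt two_ne_zero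
  have hv₀ : DifferentiableAt ℝ v x := hv.differentiableAt two_ne_zero
  have first_partial (k : ι) : partialDeriv k (fun y => u y ⬝ᵥ v y) =ᶠ[𝓝 x]
      fun y => partialDeriv k u y ⬝ᵥ v y + u y ⬝ᵥ partialDeriv k v y := by
    filter_upwards [hu.eventually (by simp), hv.eventually (by simp)] with y huy hvy
    exact partialDeriv_dotProduct (huy.differentiableAt two_ne_zero)
      (hvy.differentiableAt two_ne_zero) k
  have second_partial (k : ι) : partialDeriv k (partialDeriv k fun y => u y ⬝ᵥ v y) x =
      partialDeriv k (partialDeriv k u) x ⬝ᵥ v x +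
        2 * (partialDeriv k u x ⬝ᵥ partialDeriv k v x) +
        u x ⬝ᵥ partialDeriv k (partialDeriv k v) x := by
    rw [(partialDeriv_congr (first_partial k) k).eq_of_nhds,
      partialDeriv_add (differentiableAt_dotProduct (hu₁ k) hv₀)
        (differentiableAt_dotProduct hu₀ (hv₁ k)),
      partialDeriv_dotProduct (hu₁ k) hv₀, partialDeriv_dotProduct hu₀ (hv₁ k)]
    ring
  simp only [coordLaplacian, second_partial, Finset.sum_add_distrib, Finset.mul_sum,
    sum_dotProduct, dotProduct_sum]

lemma partialDeriv_eq_zero_of_harmonic_of_sum_dotProduct_self_const [Fintype κ] [Fintype s]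
    {w : s → (ι → ℝ) → κ → ℝ} {C : ℝ} (hw : ∀ a, ContDiffAt ℝ 2 (w a) x)
    (hharm : ∀ a, coordLaplacian (w a) x = 0)
    (hconst : (fun y => ∑ a, w a y ⬝ᵥ w a y) =ᶠ[𝓝 x] fun _ => C) (a : s) (k : ι) :
    partialDeriv k (w a) x = 0 := by
  have bochner : coordLaplacian (fun y => ∑ a, w a y ⬝ᵥ w a y) x =
      2 * ∑ a, ∑ k, partialDeriv k (w a) x ⬝ᵥ partialDeriv k (w a) x := by
    rw [coordLaplacian_sum fun a _ => contDiffAt_dotProduct (hw a) (hw a), Finset.mul_sum]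
    simp only [coordLaplacian_dotProduct (hw _) (hw _), hharm, zero_dotProduct, dotProduct_zero,
      zero_add, add_zero]
  have energy_eq_zero : ∑ a, ∑ k, partialDeriv k (w a) x ⬝ᵥ partialDeriv k (w a) x = 0 := by
    rw [coordLaplacian_congr hconst, coordLaplacian_const] at bochner
    linarith
  have nonneg (a : s) (k : ι) : 0 ≤ partialDeriv k (w a) x ⬝ᵥ partialDeriv k (w a) x :=
    Finset.sum_nonneg fun _ _ => mul_self_nonneg _
  have inner_sum_eq_zero := (Finset.sum_eq_zero_iff_of_nonneg fun a _ =>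
    Finset.sum_nonneg fun k _ => nonneg a k).1 energy_eq_zero a (Finset.mem_univ a)
  exact dotProduct_self_eq_zero.1 <| (Finset.sum_eq_zero_iff_of_nonneg fun k _ => nonneg a k).1
    inner_sum_eq_zero k (Finset.mem_univ k)

end PartialDerivatives

section PullbackMetric

variable {ι κ : Type*} [DecidableEq ι] {ψ : (ι → ℝ) → κ → ℝ} {x : ι → ℝ}

/-- The Jacobian matrix of a map between coordinate spaces of arbitrary dimensions;
`jac` is the case `ι = κ = Fin 3`. -/
noncomputable def jacobian [Fintype κ] (ψ : (ι → ℝ) → κ → ℝ) (x : ι → ℝ) : Matrix κ ι ℝ :=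
  of fun a i => partialDeriv i ψ x a

/-- The row-wise divergence of a matrix field; `mdiv` is the case `ι = κ = Fin 3`. -/
noncomputable def rowDivergence [Fintype ι] (T : (ι → ℝ) → Matrix κ ι ℝ) (x : ι → ℝ) : κ → ℝ :=
  fun a => ∑ j, partialDeriv j (fun y => T y a j) x

variable [Fintype κ]

/-- The pullback `Dψᵀ Dψ` of the Euclidean metric under `ψ`; `cField` is the case
`ι = κ = Fin 3`. -/
noncomputable def pullbackMetric (ψ : (ι → ℝ) → κ → ℝ) (x : ι → ℝ) : Matrix ι ι ℝ :=
  (jacobian ψ x)ᵀ * jacobian ψ x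

lemma pullbackMetric_apply (i j : ι) :
    pullbackMetric ψ x i j = partialDeriv i ψ x ⬝ᵥ partialDeriv j ψ x :=
  rfl

variable [Fintype ι]

lemma trace_pullbackMetric :
    (pullbackMetric ψ x).trace = ∑ i, partialDeriv i ψ x ⬝ᵥ partialDeriv i ψ x :=
  rfl

lemma partialDeriv_trace_pullbackMetric (hψ : ContDiffAt ℝ 2 ψ x) (i : ι) :
    partialDeriv i (fun y => (pullbackMetric ψ y).trace) x =
      2 * ∑ j, partialDeriv j (partialDeriv i ψ) x ⬝ᵥ partialDeriv j ψ x := by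
  have hψ' := differentiableAt_partialDeriv hψ
  simp only [trace_pullbackMetric]
  rw [partialDeriv_sum fun j _ => differentiableAt_dotProduct (hψ' j) (hψ' j), Finset.mul_sum]
  refine Finset.sum_congr rfl fun j _ => ?_
  rw [partialDeriv_dotProduct (hψ' j) (hψ' j), partialDeriv_comm hψ i j, dotProduct_comm, two_mul]

lemma rowDivergence_pullbackMetric (hψ : ContDiffAt ℝ 2 ψ x) (i : ι) :
    rowDivergence (pullbackMetric ψ) x i =
      partialDeriv i (fun y => (pullbackMetric ψ y).trace) x / 2 +
        (coordLaplacian ψ x ᵥ* jacobian ψ x) i := by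
  have hψ' := differentiableAt_partialDeriv hψ
  calc rowDivergence (pullbackMetric ψ) x i
      = ∑ j, (partialDeriv j (partialDeriv i ψ) x ⬝ᵥ partialDeriv j ψ x +
          partialDeriv i ψ x ⬝ᵥ partialDeriv j (partialDeriv j ψ) x) :=
        Finset.sum_congr rfl fun j _ => partialDeriv_dotProduct (hψ' i) (hψ' j) j
    _ = partialDeriv i (fun y => (pullbackMetric ψ y).trace) x / 2 +
          partialDeriv i ψ x ⬝ᵥ coordLaplacian ψ x := by
        rw [partialDeriv_trace_pullbackMetric hψ, mul_div_cancel_left₀ _ two_ne_zero,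
          coordLaplacian, dotProduct_sum, Finset.sum_add_distrib]
    _ = partialDeriv i (fun y => (pullbackMetric ψ y).trace) x / 2 +
          (coordLaplacian ψ x ᵥ* jacobian ψ x) i := by
        rw [dotProduct_comm]
        rfl

lemma coordLaplacian_eq_zero_of_rowDivergence_pullbackMetric_eq_zero {C : ℝ}
    (hψ : ContDiffAt ℝ 2 ψ x) (hrank : LinearIndependent ℝ (jacobian ψ x).row)
    (htr : (fun y => (pullbackMetric ψ y).trace) =ᶠ[𝓝 x] fun _ => C)
    (hdiv : rowDivergence (pullbackMetric ψ) x = 0) : coordLaplacian ψ x = 0 := by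
  refine vecMul_injective_iff.2 hrank ?_
  ext i
  have stress_energy := rowDivergence_pullbackMetric hψ i
  rw [(partialDeriv_congr htr i).eq_of_nhds, partialDeriv_const, hdiv, zero_div, zero_add]
    at stress_energy
  simpa only [zero_vecMul] using stress_energy.symm

theorem ericksen_compressible_general {U : Set (ι → ℝ)} (hU : IsOpen U) (hUc : IsPreconnected U)
    (hψ : ContDiffOn ℝ 3 ψ U) (hrank : ∀ x ∈ U, LinearIndependent ℝ (jacobian ψ x).row)
    (htr : ∀ x ∈ U, ∀ y ∈ U, (pullbackMetric ψ x).trace = (pullbackMetric ψ y).trace)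
    (hdiv : ∀ x ∈ U, rowDivergence (pullbackMetric ψ) x = 0) :
    ∀ x ∈ U, ∀ y ∈ U, jacobian ψ x = jacobian ψ y := by
  have smooth (z) (hz : z ∈ U) : ContDiffAt ℝ 3 ψ z := hψ.contDiffAt (hU.mem_nhds hz)
  have smooth_partial (z) (hz : z ∈ U) (i : ι) : ContDiffAt ℝ 2 (partialDeriv i ψ) z :=
    contDiffAt_partialDeriv (smooth z hz) (by norm_num) i
  have trace_const (z) (hz : z ∈ U) :
      (fun y => (pullbackMetric ψ y).trace) =ᶠ[𝓝 z] fun _ => (pullbackMetric ψ z).trace := by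
    filter_upwards [hU.mem_nhds hz] with y hy using htr y hy z hz
  have harmonic (z) (hz : z ∈ U) : coordLaplacian ψ z = 0 :=
    coordLaplacian_eq_zero_of_rowDivergence_pullbackMetric_eq_zero
      ((smooth z hz).of_le (by norm_num)) (hrank z hz) (trace_const z hz) (hdiv z hz)
  have harmonic_partial (z) (hz : z ∈ U) (i : ι) : coordLaplacian (partialDeriv i ψ) z = 0 := by
    have locally_harmonic : coordLaplacian ψ =ᶠ[𝓝 z] fun _ => 0 := by
      filter_upwards [hU.mem_nhds hz] with y hy using harmonic y hy
    rw [coordLaplacian_partialDeriv (smooth z hz),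
      (partialDeriv_congr locally_harmonic i).eq_of_nhds, partialDeriv_const]
  have second_partial (i : ι) (z) (hz : z ∈ U) (k : ι) :
      partialDeriv k (partialDeriv i ψ) z = 0 :=
    partialDeriv_eq_zero_of_harmonic_of_sum_dotProduct_self_const (smooth_partial z hz)
      (harmonic_partial z hz) (trace_const z hz) i k
  intro x hx y hy
  ext a i
  exact congrFun (eq_of_partialDeriv_eq_zero hU hUc (fun z hz => ((smooth_partial z hz
    i).differentiableAt two_ne_zero).differentiableWithinAt) (second_partial i) hx hy) a

end PullbackMetric

section Invariants

lemma two_mul_trace_adjugate_fin_three {R : Type*} [CommRing R] (A : Matrix (Fin 3) (Fin 3) R) :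
    2 * A.adjugate.trace = A.trace ^ 2 - (A * A).trace := by
  rw [adjugate_fin_three]
  simp only [trace_fin_three, mul_apply, Fin.sum_univ_three, of_apply, cons_val]
  ring

/-- For singular `A` both sides are zero, by the conventions `A⁻¹ = 0` and `x / 0 = 0`. -/
lemma trace_inv_fin_three {K : Type*} [Field K] [NeZero (2 : K)] (A : Matrix (Fin 3) (Fin 3) K) :
    A⁻¹.trace = (A.trace ^ 2 - (A * A).trace) / 2 / A.det := by
  rw [inv_def, trace_smul, Ring.inverse_eq_inv', ← two_mul_trace_adjugate_fin_three,
    mul_div_cancel_left₀ _ two_ne_zero, smul_eq_mul, inv_mul_eq_div]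

variable {ψ : (Fin 3 → ℝ) → Fin 3 → ℝ} {x : Fin 3 → ℝ}

lemma bField_inv (h : (jac ψ x).det ≠ 0) : (bField ψ x)⁻¹ = cField ψ x := by
  rw [bField, Matrix.mul_inv_rev, ← transpose_nonsing_inv, nonsing_inv_nonsing_inv _ h.isUnit,
    cField]

lemma trace_cField_s7 (h : (jac ψ x).det ≠ 0) : (cField ψ x).trace =
    ((bField ψ x).trace ^ 2 - (bField ψ x * bField ψ x).trace) / 2 / (bField ψ x).det := by
  rw [← bField_inv h, trace_inv_fin_three]

end Invariants

/-- Ericksen's theorem for compressible isotropic solids. If the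
principal invariants of `b` are constant on an open connected `U ⊆ ℝ³` and
`div b = div c = 0`, then `Dψ` is constant, i.e., the deformation is homogeneous. -/
theorem ericksen_compressible
    (U : Set (Fin 3 → ℝ)) (hUopen : IsOpen U) (hUconn : IsConnected U)
    (ψ : (Fin 3 → ℝ) → (Fin 3 → ℝ)) (hψ : ContDiffOn ℝ (⊤ : ℕ∞) ψ U)
    (hinv : ∀ x ∈ U, (jac ψ x).det ≠ 0)
    (hI1 : ∀ x ∈ U, ∀ y ∈ U, (bField ψ x).trace = (bField ψ y).trace)
    (hI2 : ∀ x ∈ U, ∀ y ∈ U,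
      ((bField ψ x).trace ^ 2 - (bField ψ x * bField ψ x).trace) / 2
        = ((bField ψ y).trace ^ 2 - (bField ψ y * bField ψ y).trace) / 2)
    (hI3 : ∀ x ∈ U, ∀ y ∈ U, (bField ψ x).det = (bField ψ y).det)
    (hdivb : ∀ x ∈ U, mdiv (fun y => bField ψ y) x = 0)
    (hdivc : ∀ x ∈ U, mdiv (fun y => cField ψ y) x = 0) :
    ∀ x ∈ U, ∀ y ∈ U, jac ψ x = jac ψ y := by
  have htr : ∀ x ∈ U, ∀ y ∈ U, (cField ψ x).trace = (cField ψ y).trace := fun x hx y hy => by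
    rw [trace_cField_s7 (hinv x hx), trace_cField_s7 (hinv y hy), hI2 x hx y hy, hI3 x hx y hy]
  exact ericksen_compressible_general hUopen hUconn.isPreconnected
    (hψ.of_le (WithTop.coe_le_coe.2 le_top))
    (fun x hx => Matrix.linearIndependent_rows_of_det_ne_zero (hinv x hx)) htr hdivc
end
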